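/- arXiv:1701.00420 — 4 statements merged into one kernel-verified Lean document; each statement's English description precedes it below -/
import Mathlib

section
/- Let G be a finite group, let M = (D, σ, α) be a connected combinatorial map, and let χ : G → ℂ be a class function written as χ = Σ_{λ ∈ Irr(G)} m_λ·χ_λ with coefficients m_λ ∈ ℂ. Then, as an identity in ℂ, P_χ(M) = |G|^{|E(M)|} · Σ_{λ ∈ Irr(G)} χ_λ(1)^{|F(M)|−|E(M)|} · m_λ^{|V(M)|}, where the exponent |F(M)|−|E(M)| is an integer (possibly negative). -/
open Equiv

/-- The setoid on darts whose classes are the cycles (orbits) of a permutation. -/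
def Equiv.Perm.cycleSetoid {D : Type*} (τ : Equiv.Perm D) : Setoid D :=
  ⟨τ.SameCycle, ⟨fun x => Equiv.Perm.SameCycle.refl τ x, fun h => h.symm, fun h h' => h.trans h'⟩⟩

/-- The number of cycles (orbits) of a permutation. -/
noncomputable def Equiv.Perm.cycleCount {D : Type*} (τ : Equiv.Perm D) : ℕ :=
  Nat.card (Quotient τ.cycleSetoid)

/-- The ordered product of the values of `κ` around the `τ`-orbit of the dart `d`. -/
noncomputable def aroundProd {D G : Type*} [Group G] (τ : Equiv.Perm D) (κ : D → G) (d : D) : G :=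
  ((List.range (Function.minimalPeriod (⇑τ) d)).map fun i => κ ((τ ^ i) d)).prod

/-- A `G`-labelling of a combinatorial map with edge involution `α`. -/
def IsGLabelling {D G : Type*} [Group G] (α : Equiv.Perm D) (κ : D → G) : Prop :=
  ∀ d, κ (α d) = (κ d)⁻¹

/-- A `G`-flow on the combinatorial map `(D, σ, α)`. -/
def IsGFlow {D G : Type*} [Group G] (σ α : Equiv.Perm D) (κ : D → G) : Prop :=
  IsGLabelling α κ ∧ ∀ d, aroundProd σ κ d = 1

/-- A local `G`-tension on the combinatorial map `(D, σ, α)`: the product around every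
face (orbit of `σ ∘ α`) is the identity. -/
def IsLocalTension {D G : Type*} [Group G] (σ α : Equiv.Perm D) (κ : D → G) : Prop :=
  IsGLabelling α κ ∧ ∀ d, aroundProd (σ * α) κ d = 1

/-- A closed walk in the combinatorial map `(D, σ, α)`, as a nonempty list of darts. -/
def IsClosedWalk {D : Type*} (σ α : Equiv.Perm D) (W : List D) : Prop :=
  ∃ h : W ≠ [], W.Chain' (fun a b => σ.SameCycle (α a) b) ∧
    σ.SameCycle (α (W.getLast h)) (W.head h)

/-- A global `G`-tension on the combinatorial map `(D, σ, α)`. -/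
def IsGlobalTension {D G : Type*} [Group G] (σ α : Equiv.Perm D) (κ : D → G) : Prop :=
  IsGLabelling α κ ∧ ∀ W : List D, IsClosedWalk σ α W → (W.map κ).prod = 1

/-- Connectivity of the combinatorial map `(D, σ, α)`: the group generated by `σ` and `α`
acts transitively on the darts. -/
def MapConnected {D : Type*} (σ α : Equiv.Perm D) : Prop :=
  ∀ d d' : D, ∃ g ∈ Subgroup.closure ({σ, α} : Set (Equiv.Perm D)), g d = d'

/-- A covering of combinatorial maps `(D', σ', α') → (D, σ, α)`. -/
def IsMapCovering {D' D : Type*} (σ' α' : Equiv.Perm D') (σ α : Equiv.Perm D)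
    (p : D' → D) : Prop :=
  Function.Surjective p ∧ (∀ d, p (σ' d) = σ (p d)) ∧ (∀ d, p (α' d) = α (p d)) ∧
    ∀ d₁ d₂, σ'.SameCycle d₁ d₂ → p d₁ = p d₂ → d₁ = d₂


theorem pf_list_prod {B : Type*} [Fintype B] [DecidableEq B] (k : ℕ) :
    ∀ (M : Fin (k+1) → Matrix B B ℂ) (b c : B),
    (List.ofFn M).prod b c = ∑ a : Fin k → B, ∏ i : Fin (k+1),
      M i ((Fin.cons b a : Fin (k+1) → B) i) ((Fin.snoc a c : Fin (k+1) → B) i) := by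
  induction k with
  | zero => intro M b c; simp [Fin.snoc]
  | succ k ih =>
    intro M b c
    rw [List.ofFn_succ, List.prod_cons, Matrix.mul_apply]
    simp only [ih]
    rw [← Equiv.sum_comp (Fin.consEquiv (fun _ : Fin (k+1) => B)), Fintype.sum_prod_type]
    refine Finset.sum_congr rfl fun e _ => ?_
    rw [Finset.mul_sum]
    refine Finset.sum_congr rfl fun a _ => ?_
    have he : (Fin.consEquiv (fun _ : Fin (k+1) => B)) (e, a) = Fin.cons e a := rfl
    rw [he, ← Fin.cons_snoc_eq_snoc_cons, Fin.prod_univ_succ (n := k + 1)]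
    simp only [Fin.cons_succ, Fin.cons_zero]

theorem pf_trace {B : Type*} [Fintype B] [DecidableEq B] (k : ℕ) [NeZero k]
    (M : ℕ → Matrix B B ℂ) (w : B → ℂ) :
    ∑ b, w b * ((List.range k).map M).prod b b =
      ∑ a : Fin k → B, w (a 0) * ∏ i : Fin k, M i (a i) (a (i + 1)) := by
  obtain ⟨k, rfl⟩ : ∃ k', k = k' + 1 := Nat.exists_eq_succ_of_ne_zero (NeZero.ne k)
  have : (List.range (k+1)).map M = List.ofFn (fun i : Fin (k+1) => M i) := by
    rw [List.ofFn_eq_map, ← List.map_coe_finRange_eq_range, List.map_map]; rfl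
  rw [this]
  simp only [pf_list_prod]
  rw [← Equiv.sum_comp (Fin.consEquiv (fun _ : Fin (k+1) => B)), Fintype.sum_prod_type]
  refine Finset.sum_congr rfl fun e _ => ?_
  rw [Finset.mul_sum]
  refine Finset.sum_congr rfl fun a _ => ?_
  simp only [Fin.consEquiv_apply]
  congr 1
  refine Finset.prod_congr rfl fun i _ => ?_
  congr 1
  refine Fin.lastCases ?_ (fun j => ?_) i
  · simp
  · simp

theorem pf_period_pos {D : Type*} [Finite D] (σ : Equiv.Perm D) (d : D) :
    0 < Function.minimalPeriod (⇑σ) d :=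
  Function.minimalPeriod_pos_of_mem_periodicPts
    (Function.Injective.mem_periodicPts σ.injective d)

instance pf_neZero {D : Type*} [Finite D] (σ : Equiv.Perm D) (d : D) :
    NeZero (Function.minimalPeriod (⇑σ) d) := ⟨(pf_period_pos σ d).ne'⟩

theorem pf_mk_eq {D : Type*} (σ : Equiv.Perm D) (x y : D) :
    (Quotient.mk σ.cycleSetoid x = Quotient.mk σ.cycleSetoid y) ↔ σ.SameCycle x y :=
  Quotient.eq

/-- darts listed cycle by cycle -/
noncomputable def pfCyc {D : Type*} [Finite D] (σ : Equiv.Perm D) :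
    (Σ v : Quotient σ.cycleSetoid, Fin (Function.minimalPeriod (⇑σ) v.out)) ≃ D :=
  Equiv.ofBijective (fun p => (σ ^ (p.2 : ℕ)) p.1.out) (by
    have hcyc : ∀ (v : Quotient σ.cycleSetoid) (i : ℕ),
        Quotient.mk σ.cycleSetoid ((σ ^ i) v.out) = v := by
      intro v i
      conv_rhs => rw [← v.out_eq]
      rw [pf_mk_eq]
      exact Equiv.Perm.SameCycle.symm ⟨i, by simp⟩
    constructor
    · rintro ⟨v, i⟩ ⟨w, j⟩ h
      simp only at h
      have hvw : v = w := by rw [← hcyc v i, ← hcyc w j, h]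
      subst hvw
      simp only [Sigma.mk.injEq, heq_eq_eq, true_and]
      rw [← Equiv.Perm.iterate_eq_pow, ← Equiv.Perm.iterate_eq_pow,
        Function.iterate_eq_iterate_iff_of_lt_minimalPeriod i.2 j.2] at h
      exact Fin.ext h
    · intro d
      have h : σ.SameCycle (Quotient.mk σ.cycleSetoid d).out d := by
        rw [← pf_mk_eq]; exact Quotient.out_eq _
      obtain ⟨i, hi⟩ := h.exists_nat_pow_eq
      refine ⟨⟨Quotient.mk σ.cycleSetoid d, ⟨i % _, Nat.mod_lt _ (pf_period_pos σ _)⟩⟩, ?_⟩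
      simp only
      rw [← Equiv.Perm.iterate_eq_pow, Function.iterate_mod_minimalPeriod_eq,
        Equiv.Perm.iterate_eq_pow, hi])

theorem pfCyc_apply {D : Type*} [Finite D] (σ : Equiv.Perm D) (v : Quotient σ.cycleSetoid)
    (i : Fin (Function.minimalPeriod (⇑σ) v.out)) :
    pfCyc σ ⟨v, i⟩ = (σ ^ (i : ℕ)) v.out := rfl

theorem pfCyc_succ {D : Type*} [Finite D] (σ : Equiv.Perm D) (v : Quotient σ.cycleSetoid)
    (i : Fin (Function.minimalPeriod (⇑σ) v.out)) :
    pfCyc σ ⟨v, i + 1⟩ = σ (pfCyc σ ⟨v, i⟩) := by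
  rw [pfCyc_apply, pfCyc_apply, ← Equiv.Perm.mul_apply, ← pow_succ', Fin.val_add,
    ← Equiv.Perm.iterate_eq_pow, ← Equiv.Perm.iterate_eq_pow,
    Function.iterate_mod_minimalPeriod_eq, Function.iterate_add_apply,Function.iterate_add_apply]
  congr 1
  rw [Fin.val_one', Function.iterate_mod_minimalPeriod_eq]

theorem pf_vertex {D : Type*} [Fintype D] [DecidableEq D] (σ : Equiv.Perm D) [Fintype (Quotient σ.cycleSetoid)]
    {B : Type*} [Fintype B] [DecidableEq B]
    (M : D → Matrix B B ℂ) (w : B → ℂ) :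
    ∏ v : Quotient σ.cycleSetoid, (∑ b, w b *
      (((List.range (Function.minimalPeriod (⇑σ) v.out)).map
        fun i => M ((σ ^ i) v.out)).prod) b b) =
    ∑ a : D → B, (∏ v : Quotient σ.cycleSetoid, w (a v.out)) * ∏ d, M d (a d) (a (σ d)) := by
  classical
  simp only [pf_trace]
  rw [Finset.prod_univ_sum, Fintype.piFinset_univ]
  rw [← Equiv.sum_comp ((Equiv.arrowCongr (pfCyc σ) (Equiv.refl B)).symm.trans (Equiv.piCurry (fun v _ => B)))]
  refine Finset.sum_congr rfl fun a _ => ?_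
  rw [Finset.prod_mul_distrib]
  congr 1
  rw [← Equiv.prod_comp (pfCyc σ), Fintype.prod_sigma]
  refine Finset.prod_congr rfl fun v _ => Finset.prod_congr rfl fun i _ => ?_
  rw [← pfCyc_succ]
  rfl
open CategoryTheory in
/-- Turn an equivariant linear map into a morphism. -/
noncomputable def pfHom {G : Type} [Group G] (V W : FDRep ℂ G) (T : V →ₗ[ℂ] W)
    (hT : ∀ g, T ∘ₗ V.ρ g = W.ρ g ∘ₗ T) : V ⟶ W :=
  ⟨InducedCategory.homMk (ModuleCat.ofHom T), fun g => by
    ext1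
    simp only [FGModuleCat.obj_carrier]
    ext x
    exact LinearMap.congr_fun (hT g) x⟩

open CategoryTheory in
theorem pf_schur_ne {G : Type} [Group G] (V W : FDRep ℂ G) [Simple V] [Simple W]
    (h : ¬ Nonempty (V ≅ W)) (T : V →ₗ[ℂ] W)
    (hT : ∀ g, T ∘ₗ V.ρ g = W.ρ g ∘ₗ T) : T = 0 := by
  have h0 : pfHom V W T hT = 0 := by
    by_contra hne
    have := isIso_of_hom_simple hne
    exact h ⟨asIso (pfHom V W T hT)⟩
  have : (pfHom V W T hT).hom.hom.hom = (0 : V ⟶ W).hom.hom.hom := by rw [h0]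
  exact this

open CategoryTheory in
theorem pf_schur_self {G : Type} [Group G] (V : FDRep ℂ G) [Simple V]
    (T : V →ₗ[ℂ] V)
    (hT : ∀ g, T ∘ₗ V.ρ g = V.ρ g ∘ₗ T) : ∃ c : ℂ, T = c • LinearMap.id := by
  obtain ⟨c, hc⟩ := endomorphism_simple_eq_smul_id ℂ (pfHom V V T hT)
  refine ⟨c, ?_⟩
  have : (pfHom V V T hT).hom.hom.hom = (c • 𝟙 V : V ⟶ V).hom.hom.hom := by rw [hc]
  exact this

open CategoryTheory in
theorem pf_finrank_pos {G : Type} [Group G] (V : FDRep ℂ G) [Simple V] :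
    Module.finrank ℂ V ≠ 0 := by
  intro h
  have hs : Subsingleton V := Module.finrank_zero_iff.1 h
  apply id_nonzero V
  ext x
  exact Subsingleton.elim (α := V) _ _

/-- averaged map -/
noncomputable def pfAvg {G : Type} [Group G] [Fintype G] (V W : FDRep ℂ G) (X : V →ₗ[ℂ] W) :
    V →ₗ[ℂ] W := ∑ g : G, W.ρ g ∘ₗ X ∘ₗ V.ρ g⁻¹

theorem pfAvg_comm {G : Type} [Group G] [Fintype G] (V W : FDRep ℂ G) (X : V →ₗ[ℂ] W) (h : G) :
    pfAvg V W X ∘ₗ V.ρ h = W.ρ h ∘ₗ pfAvg V W X := by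
  unfold pfAvg
  ext x
  simp only [LinearMap.comp_apply, LinearMap.sum_apply, map_sum]
  rw [← Equiv.sum_comp (Equiv.mulLeft h)]
  refine Finset.sum_congr rfl fun g _ => ?_
  simp [mul_assoc, ← Module.End.mul_apply, ← map_mul]

/-- matrix of a representation -/
noncomputable def pfMat {G : Type} [Group G] (V : FDRep ℂ G) (g : G) :
    Matrix (Fin (Module.finrank ℂ V)) (Fin (Module.finrank ℂ V)) ℂ :=
  LinearMap.toMatrix (Module.finBasis ℂ V) (Module.finBasis ℂ V) (V.ρ g)

theorem pfMat_mul {G : Type} [Group G] (V : FDRep ℂ G) (g h : G) :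
    pfMat V (g * h) = pfMat V g * pfMat V h := by
  simp [pfMat, LinearMap.toMatrix_mul]

theorem pfMat_one {G : Type} [Group G] (V : FDRep ℂ G) : pfMat V (1 : G) = 1 := by
  simp [pfMat]

theorem pfMat_trace {G : Type} [Group G] (V : FDRep ℂ G) (g : G) :
    V.character g = (pfMat V g).trace := by
  rw [pfMat, FDRep.character, LinearMap.trace_eq_matrix_trace ℂ (Module.finBasis ℂ V)]

theorem pfAvg_mat {G : Type} [Group G] [Fintype G] (V W : FDRep ℂ G)
    (Y : Matrix (Fin (Module.finrank ℂ W)) (Fin (Module.finrank ℂ V)) ℂ) :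
    LinearMap.toMatrix (Module.finBasis ℂ V) (Module.finBasis ℂ W)
      (pfAvg V W (Matrix.toLin (Module.finBasis ℂ V) (Module.finBasis ℂ W) Y))
      = ∑ g : G, pfMat W g * (Y * pfMat V g⁻¹) := by
  unfold pfAvg pfMat
  rw [map_sum]
  refine Finset.sum_congr rfl fun g _ => ?_
  rw [LinearMap.toMatrix_comp _ (Module.finBasis ℂ W), LinearMap.toMatrix_comp _ (Module.finBasis ℂ V),
    LinearMap.toMatrix_toLin]

theorem pf_single {m n : ℕ} (A : Matrix (Fin m) (Fin m) ℂ) (B : Matrix (Fin n) (Fin n) ℂ)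
    (a b : Fin m) (c d : Fin n) :
    (A * (Matrix.single b c (1:ℂ) * B)) a d = A a b * B c d := by
  simp [Matrix.mul_apply, Matrix.single_apply, ite_and]

open CategoryTheory in
theorem pf_orth_ne {G : Type} [Group G] [Fintype G] (V W : FDRep ℂ G) [Simple V] [Simple W]
    (h : ¬ Nonempty (V ≅ W)) (a b : Fin (Module.finrank ℂ W)) (c d : Fin (Module.finrank ℂ V)) :
    ∑ g : G, pfMat W g a b * pfMat V g⁻¹ c d = 0 := by
  have h1 := pfAvg_mat V W (Matrix.single b c 1)
  rw [pf_schur_ne V W h _ (pfAvg_comm V W _)] at h1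
  have h2 := congr_fun (congr_fun h1 a) d
  simp only [Matrix.sum_apply, pf_single] at h2
  simpa using h2.symm

open CategoryTheory in
theorem pf_orth_self {G : Type} [Group G] [Fintype G] (V : FDRep ℂ G) [Simple V]
    (a b c d : Fin (Module.finrank ℂ V)) :
    ∑ g : G, pfMat V g a b * pfMat V g⁻¹ c d =
      if a = d ∧ b = c then (Nat.card G : ℂ) / Module.finrank ℂ V else 0 := by
  have h1 := pfAvg_mat V V (Matrix.single b c 1)
  obtain ⟨x, hx⟩ := pf_schur_self V _ (pfAvg_comm V V (Matrix.toLin (Module.finBasis ℂ V) (Module.finBasis ℂ V) (Matrix.single b c 1)))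
  rw [hx] at h1
  have h2 := congr_fun (congr_fun h1 a) d
  simp only [Matrix.sum_apply, pf_single] at h2
  have h3 := congr_arg Matrix.trace h1
  have h4 : ∀ g : G, (pfMat V g * (Matrix.single b c (1:ℂ) * pfMat V g⁻¹)).trace
      = if b = c then 1 else 0 := by
    intro g
    rw [← mul_assoc, Matrix.trace_mul_comm, ← mul_assoc, ← pfMat_mul]
    simp [pfMat_one, Matrix.trace, Matrix.single_apply, ite_and, eq_comm]
  rw [Matrix.trace_sum, Finset.sum_congr rfl (fun g _ => h4 g)] at h3
  have hn : (Module.finrank ℂ V : ℂ) ≠ 0 := by exact_mod_cast pf_finrank_pos V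
  rw [← h2]
  simp at h3 ⊢
  have hx : x = (if b = c then (Fintype.card G : ℂ) else 0) / Module.finrank ℂ V := by
    rw [eq_div_iff hn]; simpa using h3
  rw [hx, Matrix.one_apply]
  by_cases h5 : a = d <;> by_cases h6 : b = c <;> simp [h5, h6]

theorem pf_period_two {D : Type*} (α : Equiv.Perm D)
    (hinv : ∀ d, α (α d) = d) (hfpf : ∀ d, α d ≠ d) (d : D) :
    Function.minimalPeriod (⇑α) d = 2 := by
  have : Fact (Nat.Prime 2) := ⟨Nat.prime_two⟩
  exact Function.minimalPeriod_eq_prime (hinv d) (hfpf d)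

theorem pf_out_cases {D : Type*} [Finite D] (α : Equiv.Perm D)
    (hinv : ∀ d, α (α d) = d) (hfpf : ∀ d, α d ≠ d) (d : D) :
    ∃ e : Quotient α.cycleSetoid, d = e.out ∨ d = α e.out := by
  obtain ⟨⟨e, i, hi⟩, rfl⟩ := (pfCyc α).surjective d
  refine ⟨e, ?_⟩
  rw [pfCyc_apply]
  rw [pf_period_two α hinv hfpf] at hi
  interval_cases i <;> simp

theorem pf_prod_edges {D : Type*} [Fintype D] (α : Equiv.Perm D)
    [Fintype (Quotient α.cycleSetoid)]
    (hinv : ∀ d, α (α d) = d) (hfpf : ∀ d, α d ≠ d) (h : D → ℂ) :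
    ∏ d, h d = ∏ e : Quotient α.cycleSetoid, h e.out * h (α e.out) := by
  rw [← Equiv.prod_comp (pfCyc α), Fintype.prod_sigma]
  refine Finset.prod_congr rfl fun e _ => ?_
  simp only [pfCyc_apply]
  rw [← Finset.prod_range (fun i => h ((α ^ i) e.out)), pf_period_two α hinv hfpf]
  simp [Finset.prod_range_succ]

theorem pf_lab_bij {D G : Type*} [Finite D] [Group G] (α : Equiv.Perm D)
    (hinv : ∀ d, α (α d) = d) (hfpf : ∀ d, α d ≠ d) :
    Function.Bijective (fun (κ : {κ : D → G // IsGLabelling α κ})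
      (e : Quotient α.cycleSetoid) => κ.1 e.out) := by
  classical
  have hmk : ∀ d, Quotient.mk α.cycleSetoid (α d) = Quotient.mk α.cycleSetoid d := by
    intro d
    rw [pf_mk_eq]
    exact Equiv.Perm.SameCycle.symm ⟨1, by simp⟩
  constructor
  · intro κ κ' h
    apply Subtype.ext
    funext d
    obtain ⟨e, rfl | rfl⟩ := pf_out_cases α hinv hfpf d
    · exact congr_fun h e
    · rw [κ.2, κ'.2]
      exact congr_arg _ (congr_fun h e)
  · intro x
    refine ⟨⟨fun d => if d = (Quotient.mk α.cycleSetoid d).out then x (Quotient.mk α.cycleSetoid d)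
      else (x (Quotient.mk α.cycleSetoid d))⁻¹, ?_⟩, ?_⟩
    · intro d
      simp only [hmk]
      obtain ⟨e, rfl | rfl⟩ := pf_out_cases α hinv hfpf d
      · simp [hfpf]
      · simp [hmk, hfpf, hinv]
    · funext e
      simp

theorem pf_edge_sum {D G : Type*} [Fintype D] [Group G] [Fintype G] (α : Equiv.Perm D)
    [Fintype (Quotient α.cycleSetoid)] [Fintype {κ : D → G // IsGLabelling α κ}]
    (hinv : ∀ d, α (α d) = d) (hfpf : ∀ d, α d ≠ d) (f : D → G → ℂ) :
    ∑ κ : {κ : D → G // IsGLabelling α κ}, ∏ d, f d (κ.1 d) =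
      ∏ e : Quotient α.cycleSetoid, ∑ g : G, f e.out g * f (α e.out) g⁻¹ := by
  classical
  rw [Finset.prod_univ_sum, Fintype.piFinset_univ]
  refine Fintype.sum_bijective _ (pf_lab_bij α hinv hfpf) _ _ fun κ => ?_
  rw [pf_prod_edges α hinv hfpf]
  refine Finset.prod_congr rfl fun e _ => ?_
  rw [κ.2]

/-- The direct sum of all the matrix representations. -/
noncomputable def pfR {G : Type} [Group G] {ι : Type} [Fintype ι] [DecidableEq ι]
    (ρ : ι → FDRep ℂ G) :
    G →* Matrix (Σ i, Fin (Module.finrank ℂ (ρ i))) (Σ i, Fin (Module.finrank ℂ (ρ i))) ℂ where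
  toFun g := Matrix.blockDiagonal' (fun i => pfMat (ρ i) g)
  map_one' := by
    simp only [pfMat_one]
    exact Matrix.blockDiagonal'_one
  map_mul' g h := by
    simp only [pfMat_mul]
    exact Matrix.blockDiagonal'_mul _ _

theorem pfR_apply {G : Type} [Group G] {ι : Type} [Fintype ι] [DecidableEq ι]
    (ρ : ι → FDRep ℂ G) (g : G) : pfR ρ g = Matrix.blockDiagonal' (fun i => pfMat (ρ i) g) := rfl

open CategoryTheory in
theorem pfR_orth {G : Type} [Group G] [Fintype G] {ι : Type} [Fintype ι] [DecidableEq ι]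
    (ρ : ι → FDRep ℂ G) (hsimple : ∀ i, Simple (ρ i))
    (hpairwise : ∀ i j, Nonempty (ρ i ≅ ρ j) → i = j)
    (a b c d : Σ i, Fin (Module.finrank ℂ (ρ i))) :
    ∑ g : G, pfR ρ g a b * pfR ρ g⁻¹ c d =
      if a = d ∧ b = c ∧ a.1 = b.1 then (Nat.card G : ℂ) / Module.finrank ℂ (ρ a.1) else 0 := by
  obtain ⟨i, a⟩ := a
  obtain ⟨j, b⟩ := b
  obtain ⟨k, c⟩ := c
  obtain ⟨l, d⟩ := d
  by_cases h1 : i = j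
  · subst h1
    by_cases h2 : k = l
    · subst h2
      simp only [pfR_apply, Matrix.blockDiagonal'_apply_eq]
      have := hsimple i
      have := hsimple k
      by_cases h3 : i = k
      · subst h3
        rw [pf_orth_self]
        simp
      · rw [pf_orth_ne (ρ k) (ρ i) (fun h => h3 (hpairwise _ _ h).symm)]
        rw [if_neg]
        rintro ⟨h, -⟩
        exact h3 (congr_arg Sigma.fst h)
    · rw [if_neg]
      · refine Finset.sum_eq_zero fun g _ => ?_
        rw [pfR_apply ρ g⁻¹, Matrix.blockDiagonal'_apply_ne _ _ _ h2, mul_zero]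
      · rintro ⟨h, h', -⟩
        exact h2 ((congr_arg Sigma.fst h').symm.trans (congr_arg Sigma.fst h))
  · rw [if_neg (fun h => h1 h.2.2)]
    refine Finset.sum_eq_zero fun g _ => ?_
    rw [pfR_apply ρ g, Matrix.blockDiagonal'_apply_ne _ _ _ h1, zero_mul]

theorem pf_char {G : Type} [Group G] {ι : Type} [Fintype ι] [DecidableEq ι]
    (ρ : ι → FDRep ℂ G) (m : ι → ℂ) (g : G) :
    ∑ i, m i * (ρ i).character g = ∑ b, m b.1 * pfR ρ g b b := by
  rw [Fintype.sum_sigma]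
  refine Finset.sum_congr rfl fun i _ => ?_
  rw [pfMat_trace, Matrix.trace, Finset.mul_sum]
  refine Finset.sum_congr rfl fun x _ => ?_
  rw [pfR_apply, Matrix.blockDiagonal'_apply_eq, Matrix.diag_apply]

theorem pf_conn {D B : Type*} (σ α : Equiv.Perm D) (hconn : MapConnected σ α) (t : D → B)
    (h1 : ∀ d, t (σ d) = t d) (h2 : ∀ d, t (α d) = t d) (d d' : D) : t d = t d' := by
  obtain ⟨g, hg, rfl⟩ := hconn d d'
  have : ∀ x, t (g x) = t x := by
    induction hg using Subgroup.closure_induction with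
    | mem x hx =>
      rcases hx with rfl | rfl
      · exact h1
      · exact h2
    | one => intro x; rfl
    | mul x y _ _ hx hy => intro z; rw [Equiv.Perm.mul_apply, hx, hy]
    | inv x _ hx => intro z; rw [← hx (x⁻¹ z)]; simp
  exact (this d).symm

theorem pf_const {D B : Type*} [Finite D] (τ : Equiv.Perm D) (t : D → B)
    (h : ∀ d, t (τ d) = t d) (d : D) : t (Quotient.mk τ.cycleSetoid d).out = t d := by
  have hs : τ.SameCycle (Quotient.mk τ.cycleSetoid d).out d := by
    rw [← pf_mk_eq]; exact Quotient.out_eq _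
  obtain ⟨i, hi⟩ := hs.exists_nat_pow_eq
  have key : ∀ (i : ℕ) (x : D), t ((τ ^ i) x) = t x := by
    intro i x
    induction i with
    | zero => rfl
    | succ i ih => rw [pow_succ', Equiv.Perm.mul_apply, h, ih]
  rw [← key i, hi]

open CategoryTheory in
/-- Formula for the partition function `P_χ(M)` of a connected combinatorial map
`M = (D, σ, α)`, for a class function `χ = ∑ λ, m_λ • χ_λ`. -/
theorem partition_function_formula
    {D : Type} [Fintype D] [Nonempty D] (σ α : Equiv.Perm D)
    (hinv : ∀ d, α (α d) = d) (hfpf : ∀ d, α d ≠ d)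
    (hconn : MapConnected σ α)
    {G : Type} [Group G] [Fintype G]
    (ι : Type) [Fintype ι] (ρ : ι → FDRep ℂ G)
    (hsimple : ∀ i, Simple (ρ i))
    (hpairwise : ∀ i j, Nonempty (ρ i ≅ ρ j) → i = j)
    (hcomplete : ∀ V : FDRep ℂ G, Simple V → ∃ i, Nonempty (V ≅ ρ i))
    (m : ι → ℂ) (χ : G → ℂ)
    (hclass : ∀ g h : G, χ (h * g * h⁻¹) = χ g)
    (hχ : ∀ g, χ g = ∑ i, m i * (ρ i).character g) :
    (∑ᶠ κ : {κ : D → G // IsGLabelling α κ},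
        ∏ᶠ v : Quotient σ.cycleSetoid, χ (aroundProd σ κ.1 v.out))
      = (Nat.card G : ℂ) ^ α.cycleCount *
        ∑ i, ((ρ i).character 1) ^ (((σ * α).cycleCount : ℤ) - (α.cycleCount : ℤ)) *
          (m i) ^ σ.cycleCount := by
  classical
  let : Fintype (Quotient σ.cycleSetoid) := Fintype.ofFinite _
  let : Fintype (Quotient α.cycleSetoid) := Fintype.ofFinite _
  let : Fintype (Quotient (σ * α).cycleSetoid) := Fintype.ofFinite _
  let : Fintype {κ : D → G // IsGLabelling α κ} := Fintype.ofFinite _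
  rw [finsum_eq_sum_of_fintype]
  simp only [finprod_eq_prod_of_fintype]
  have hn : ∀ i, (Module.finrank ℂ (ρ i) : ℂ) ≠ 0 := fun i => by
    have := hsimple i
    exact_mod_cast pf_finrank_pos (ρ i)
  -- expand the vertex factors
  have hV : ∀ κ : D → G, ∏ v : Quotient σ.cycleSetoid, χ (aroundProd σ κ v.out) =
      ∑ a : D → (Σ i, Fin (Module.finrank ℂ (ρ i))),
        (∏ v : Quotient σ.cycleSetoid, m (a v.out).1) *
          ∏ d, pfR ρ (κ d) (a d) (a (σ d)) := by
    intro κ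
    rw [← pf_vertex σ (fun d => pfR ρ (κ d)) (fun b => m b.1)]
    refine Finset.prod_congr rfl fun v _ => ?_
    rw [hχ, pf_char, aroundProd, map_list_prod, List.map_map]
    rfl
  simp only [hV]
  rw [Finset.sum_comm]
  simp only [← Finset.mul_sum]
  have hE : ∀ a : D → (Σ i, Fin (Module.finrank ℂ (ρ i))),
      ∑ κ : {κ : D → G // IsGLabelling α κ}, ∏ d, pfR ρ (κ.1 d) (a d) (a (σ d)) =
      ∏ e : Quotient α.cycleSetoid,
        if a e.out = a (σ (α e.out)) ∧ a (σ e.out) = a (α e.out) ∧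
          (a e.out).1 = (a (σ e.out)).1
        then (Nat.card G : ℂ) / Module.finrank ℂ (ρ (a e.out).1) else 0 := by
    intro a
    rw [pf_edge_sum α hinv hfpf (fun d g => pfR ρ g (a d) (a (σ d)))]
    refine Finset.prod_congr rfl fun e _ => ?_
    rw [pfR_orth ρ hsimple hpairwise]
  simp only [hE]
  -- parametrize the non-vanishing states
  rw [← Fintype.sum_of_injective
    (fun (p : Σ i, (Quotient (σ * α).cycleSetoid → Fin (Module.finrank ℂ (ρ i)))) (d : D) =>
      (⟨p.1, p.2 (Quotient.mk _ d)⟩ : Σ i, Fin (Module.finrank ℂ (ρ i))))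
    ?_ (fun p => m p.1 ^ σ.cycleCount *
      ((Nat.card G : ℂ) / Module.finrank ℂ (ρ p.1)) ^ α.cycleCount) _ ?_ ?_]
  · rw [Fintype.sum_sigma, Finset.mul_sum]
    refine Finset.sum_congr rfl fun i _ => ?_
    have hc : (Fintype.card (Quotient (σ * α).cycleSetoid)) = (σ * α).cycleCount := by
      rw [Equiv.Perm.cycleCount, Nat.card_eq_fintype_card]
    rw [Finset.sum_eq_card_nsmul (b := m i ^ σ.cycleCount *
      ((Nat.card G : ℂ) / Module.finrank ℂ (ρ i)) ^ α.cycleCount) (fun _ _ => rfl)]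
    simp only [Finset.card_univ, Fintype.card_fun, Fintype.card_fin, hc,
      nsmul_eq_mul, FDRep.char_one, Nat.cast_pow]
    rw [zpow_sub₀ (hn i), zpow_natCast, zpow_natCast, div_pow]
    ring
  · rintro ⟨i, c⟩ ⟨j, c'⟩ h
    have hij : i = j := by
      obtain ⟨d⟩ := ‹Nonempty D›
      exact congr_arg Sigma.fst (congr_fun h d)
    subst hij
    congr 1
    funext f
    obtain ⟨d, rfl⟩ := Quotient.exists_rep f
    simpa using congr_fun h d
  · intro a ha
    by_contra hne
    apply ha
    have hne2 := right_ne_zero_of_mul hne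
    rw [Finset.prod_ne_zero_iff] at hne2
    have hcond : ∀ e : Quotient α.cycleSetoid,
        a e.out = a (σ (α e.out)) ∧ a (σ e.out) = a (α e.out) ∧
          (a e.out).1 = (a (σ e.out)).1 := by
      intro e
      by_contra hc
      exact hne2 e (Finset.mem_univ _) (if_neg hc)
    have hface : ∀ d, a ((σ * α) d) = a d := by
      intro d
      rw [Equiv.Perm.mul_apply]
      obtain ⟨e, rfl | rfl⟩ := pf_out_cases α hinv hfpf d
      · exact (hcond e).1.symm
      · rw [hinv]; exact (hcond e).2.1
    have hσ : ∀ d, (a (σ d)).1 = (a d).1 := by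
      intro d
      obtain ⟨e, rfl | rfl⟩ := pf_out_cases α hinv hfpf d
      · exact (hcond e).2.2.symm
      · rw [← (hcond e).1, ← (hcond e).2.1]; exact (hcond e).2.2
    have hα : ∀ d, (a (α d)).1 = (a d).1 := by
      intro d
      rw [← hσ (α d), ← Equiv.Perm.mul_apply, hface]
    obtain ⟨d₀⟩ := ‹Nonempty D›
    have hall : ∀ d, (a d).1 = (a d₀).1 := fun d =>
      pf_conn σ α hconn (fun d => (a d).1) hσ hα d d₀
    generalize (a d₀).1 = i at hall
    have hex : ∀ d, ∃ x : Fin (Module.finrank ℂ (ρ i)), a d = ⟨i, x⟩ := by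
      intro d
      have := hall d
      subst this
      exact ⟨(a d).2, rfl⟩
    choose x hx using hex
    refine ⟨⟨i, fun f => x f.out⟩, ?_⟩
    funext d
    simp only
    rw [← hx, pf_const (σ * α) a hface]
  · rintro ⟨i, c⟩
    have hq : ∀ d, Quotient.mk (σ * α).cycleSetoid ((σ * α) d) =
        Quotient.mk (σ * α).cycleSetoid d := by
      intro d
      rw [pf_mk_eq]
      exact Equiv.Perm.SameCycle.symm ⟨1, by simp⟩
    have h1 : ∀ d, Quotient.mk (σ * α).cycleSetoid (σ (α d)) =
        Quotient.mk (σ * α).cycleSetoid d := hq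
    have h2 : ∀ d, Quotient.mk (σ * α).cycleSetoid (σ d) =
        Quotient.mk (σ * α).cycleSetoid (α d) := by
      intro d
      rw [← h1 (α d), hinv]
    dsimp only
    rw [Finset.prod_eq_pow_card (b := m i) (fun _ _ => rfl),
      Finset.prod_eq_pow_card (b := (Nat.card G : ℂ) / Module.finrank ℂ (ρ i))]
    · simp [Equiv.Perm.cycleCount, Nat.card_eq_fintype_card]
    · intro e _
      rw [if_pos]
      rw [h1, h2]
      exact ⟨rfl, rfl, rfl⟩
end

section
/- Let G be a finite group, C a conjugacy class of G, and g ≥ 0 an integer. Define A_g(G, C) := |{(x_1, …, x_g, y_1, …, y_g, z) ∈ G^{2g} × C : [x_1,y_1]·[x_2,y_2]⋯[x_g,y_g] = z⁻¹}|, where [x,y] = x·y·x⁻¹·y⁻¹. Then, as an identity in ℂ, A_g(G, C) = |G|^{2g−1} · |C| · Σ_{λ ∈ Irr(G)} χ_λ(C) / χ_λ(1)^{2g−1}, where χ_λ(C) denotes the common value of χ_λ on the elements of C, and the exponent 2g−1 is an integer (equal to −1 when g = 0). -/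
namespace FrobAux
open CategoryTheory MonoidAlgebra
variable {G : Type} [Group G] [Fintype G]

lemma char_norm (V : FDRep ℂ G) [Simple V] :
    ∑ g : G, V.character g * V.character g⁻¹ = Nat.card G :=
  (FDRep.simple_iff_char_is_norm_one V).1 inferInstance

lemma deg_ne_zero (V : FDRep ℂ G) [Simple V] : V.character 1 ≠ 0 := by
  intro h
  rw [FDRep.char_one, Nat.cast_eq_zero, Module.finrank_zero_iff] at h
  have h1 := char_norm V
  have h2 : ∀ g, V.character g = 0 := fun g => by
    have : V.ρ g = 0 := Subsingleton.elim _ _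
    rw [FDRep.character, this, map_zero]
  simp only [h2, mul_zero, Finset.sum_const_zero] at h1
  exact NeZero.ne (Nat.card G : ℂ) h1.symm

lemma schur (V : FDRep ℂ G) [Simple V] (T : V →ₗ[ℂ] V)
    (h : ∀ g, T ∘ₗ V.ρ g = V.ρ g ∘ₗ T) :
    T = (LinearMap.trace ℂ V T / V.character 1) • LinearMap.id := by
  let f : V ⟶ V := ⟨InducedCategory.homMk (ModuleCat.ofHom T), fun g ↦ by
    apply InducedCategory.hom_ext
    exact ModuleCat.hom_ext (h g)⟩
  obtain ⟨c, hc⟩ := endomorphism_simple_eq_smul_id ℂ f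
  have hT : c • LinearMap.id = T := by
    have := congrArg (fun f : V ⟶ V => f.hom.hom.hom) hc
    exact this
  have hd := deg_ne_zero V
  rw [← hT, map_smul, LinearMap.trace_id, ← FDRep.char_one, smul_eq_mul, mul_div_assoc, div_self hd,
    mul_one]

lemma class_sum (V : FDRep ℂ G) [Simple V] (c : G → ℂ) (hc : ∀ g h, c (h * g * h⁻¹) = c g) :
    ∑ g, c g • V.ρ g = ((∑ g, c g * V.character g) / V.character 1) • LinearMap.id := by
  have := schur V (∑ g, c g • V.ρ g) ?_
  · rw [this]; simp [map_sum, FDRep.character]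
  · intro h
    change (∑ g, c g • V.ρ g) * V.ρ h = V.ρ h * (∑ g, c g • V.ρ g)
    rw [Finset.sum_mul, Finset.mul_sum]
    refine Fintype.sum_equiv (MulAut.conj h⁻¹).toEquiv _ _ fun g => ?_
    have := hc g h⁻¹
    simp only [inv_inv] at this
    simp [← mul_assoc, this, ← map_mul]

lemma conj_sum (V : FDRep ℂ G) [Simple V] (A : V →ₗ[ℂ] V) :
    ∑ x, V.ρ x * A * V.ρ x⁻¹ =
      ((Nat.card G : ℂ) * LinearMap.trace ℂ V A / V.character 1) • (1 : V →ₗ[ℂ] V) := by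
  have := schur V (∑ x, V.ρ x * A * V.ρ x⁻¹) ?_
  · rw [this]
    have h : ∀ x, LinearMap.trace ℂ V (V.ρ x * A * V.ρ x⁻¹) = LinearMap.trace ℂ V A := fun x => by
      rw [LinearMap.trace_mul_comm, ← mul_assoc, ← map_mul]; simp
    simp [map_sum, h]; rfl
  · intro h
    change (∑ x, V.ρ x * A * V.ρ x⁻¹) * V.ρ h = V.ρ h * (∑ x, V.ρ x * A * V.ρ x⁻¹)
    rw [Finset.sum_mul, Finset.mul_sum]
    refine Fintype.sum_equiv (Equiv.mulLeft h⁻¹) _ _ fun g => ?_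
    simp only [Equiv.coe_mulLeft, mul_inv_rev, inv_inv, map_mul]
    simp only [← mul_assoc, ← map_mul, mul_inv_cancel, one_mul]
    simp only [mul_assoc, ← map_mul]

lemma comm_sum (V : FDRep ℂ G) [Simple V] :
    ∑ p : G × G, V.ρ (p.1 * p.2 * p.1⁻¹ * p.2⁻¹) =
      ((Nat.card G : ℂ) / V.character 1) ^ 2 • (1 : V →ₗ[ℂ] V) := by
  rw [Fintype.sum_prod_type_right]
  have h : ∀ y, ∑ x, V.ρ (x * y * x⁻¹ * y⁻¹) =
      ((Nat.card G : ℂ) / V.character 1) • (V.character y • V.ρ y⁻¹) := fun y => by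
    have := conj_sum V (V.ρ y)
    simp only [map_mul] at this ⊢
    rw [← Finset.sum_mul, this, smul_mul_assoc, one_mul, smul_smul]
    change _ = (_ * LinearMap.trace ℂ V (V.ρ y)) • _
    congr 1; ring
  simp only [h]
  rw [← Finset.smul_sum]
  have h2 := class_sum V (fun g => V.character g⁻¹) (fun g h => by
    simp only [mul_inv_rev, inv_inv, ← mul_assoc]
    rw [V.char_conj])
  rw [← Equiv.sum_comp (Equiv.inv G)]
  simp only [Equiv.inv_apply, inv_inv]
  rw [h2]
  simp only [mul_comm (V.character _⁻¹), char_norm, smul_smul, pow_two]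
  rfl

lemma list_sum (V : FDRep ℂ G) [Simple V] (g : ℕ) :
    ∑ p : Fin g → G × G, V.ρ (List.ofFn fun i => (p i).1 * (p i).2 * (p i).1⁻¹ * (p i).2⁻¹).prod =
      ((Nat.card G : ℂ) / V.character 1) ^ (2 * g) • (1 : V →ₗ[ℂ] V) := by
  induction g with
  | zero => simp
  | succ n ih =>
    rw [← (Fin.consEquiv fun _ => G × G).sum_comp, Fintype.sum_prod_type]
    simp only [Fin.consEquiv_apply, List.ofFn_succ, Fin.cons_zero, Fin.cons_succ, List.prod_cons,
      map_mul _ (_ * _ * _⁻¹ * _⁻¹) (List.prod _), ← Finset.mul_sum, ih, ← Finset.sum_mul,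
      comm_sum]
    simp only [smul_mul_assoc, one_mul, smul_smul]
    congr 1; ring

lemma irr_sum_eq_zero (f : G → ℂ)
    (hf : ∀ V : FDRep ℂ G, Simple V → ∑ g, f g • V.ρ g = 0)
    (M : Type) [AddCommGroup M] [Module ℂ M] [Module.Finite ℂ M] (σ : Representation ℂ G M)
    [σ.IsIrreducible] : ∑ g, f g • σ g = 0 := by
  have hinv := invertibleOfNonzero (NeZero.ne (Nat.card G : ℂ))
  have hs : Simple (FDRep.of σ) := by
    rw [FDRep.simple_iff_char_is_norm_one]
    have := Representation.char_orthonormal σ σ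
    rw [if_pos ⟨Representation.Equiv.refl σ⟩, inv_mul_eq_one₀ (NeZero.ne _)] at this
    exact this.symm
  exact hf _ hs

lemma smul_eq_zero_of_simple (f : G → ℂ)
    (hf : ∀ V : FDRep ℂ G, Simple V → ∑ g, f g • V.ρ g = 0)
    (M : Type) [AddCommGroup M] [Module ℂ[G] M] [hsm : IsSimpleModule ℂ[G] M] (v : M) :
    (∑ g, MonoidAlgebra.single g (f g) : ℂ[G]) • v = 0 := by
  have hirr := (Representation.isSimpleModule_iff_irreducible_ofModule M).1 hsm
  have hfin : @Module.Finite ℂ M _ _ (Module.restrictScalars ℂ ℂ[G] M) := by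
    let _ : Module ℂ M := Module.restrictScalars ℂ ℂ[G] M
    have : IsScalarTower ℂ ℂ[G] M := IsScalarTower.restrictScalars ℂ ℂ[G] M
    exact Module.Finite.trans ℂ[G] _
  have h0 := @irr_sum_eq_zero G _ _ f hf M _ (Module.restrictScalars ℂ ℂ[G] M) hfin
    (Representation.ofModule (k := ℂ) (G := G) M) hirr
  have h2 := Representation.ofModule_asAlgebraHom_apply_apply (k := ℂ) (G := G) (M := M)
    (∑ g, MonoidAlgebra.single g (f g)) ((RestrictScalars.addEquiv ℂ ℂ[G] _).symm v)
  have h1 : (Representation.ofModule (k := ℂ) (G := G) M).asAlgebraHom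
      (∑ g, MonoidAlgebra.single g (f g)) = 0 := by
    refine Eq.trans ?_ h0
    simp only [map_sum, Representation.asAlgebraHom_single]
    rfl
  rw [h1] at h2
  simp only [LinearMap.zero_apply, AddEquiv.apply_symm_apply] at h2
  simpa using h2.symm

/-- an element of the group algebra killing all simple representations is zero -/
lemma eq_zero_of_simple (f : G → ℂ)
    (hf : ∀ V : FDRep ℂ G, Simple V → ∑ g, f g • V.ρ g = 0) : f = 0 := by
  classical
  let a : ℂ[G] := ∑ g, MonoidAlgebra.single g (f g)
  have hss : Ring.jacobson ℂ[G] = ⊥ := IsSemisimpleRing.jacobson_eq_bot _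
  have ha : a ∈ Ring.jacobson ℂ[G] := by
    rw [Ring.jacobson, Module.jacobson, Submodule.mem_sInf]
    intro m hm
    have hsm : IsSimpleModule ℂ[G] (ℂ[G] ⧸ m) := isSimpleModule_iff_isCoatom.2 hm
    have h3 := smul_eq_zero_of_simple f hf (ℂ[G] ⧸ m) (Submodule.Quotient.mk (p := m) 1)
    rw [← Submodule.Quotient.mk_smul, Submodule.Quotient.mk_eq_zero] at h3
    simpa using h3
  rw [hss, Submodule.mem_bot] at ha
  ext g
  have := congrArg (fun b : ℂ[G] => b.coeff g) ha
  simpa [a, Finsupp.finsetSum_apply, Finsupp.single_apply] using this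

lemma delta 
    (ι : Type) [Fintype ι] (ρ : ι → FDRep ℂ G)
    (hsimple : ∀ i, Simple (ρ i))
    (hpairwise : ∀ i j, Nonempty (ρ i ≅ ρ j) → i = j)
    (hcomplete : ∀ V : FDRep ℂ G, Simple V → ∃ i, Nonempty (V ≅ ρ i)) [DecidableEq G] (w : G) :
    (if w = 1 then (1 : ℂ) else 0) =
      (Nat.card G : ℂ)⁻¹ * ∑ i, (ρ i).character 1 * (ρ i).character w := by
  classical
  have hinv := invertibleOfNonzero (NeZero.ne (Nat.card G : ℂ))
  let f : G → ℂ := fun w => (if w = 1 then (1 : ℂ) else 0) -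
      (Nat.card G : ℂ)⁻¹ * ∑ i, (ρ i).character 1 * (ρ i).character w⁻¹
  have hf : f = 0 := by
    refine eq_zero_of_simple f fun V hV => ?_
    rw [class_sum V f]
    · obtain ⟨j, ⟨e⟩⟩ := hcomplete V hV
      rw [FDRep.char_iso e]
      suffices h : ∑ g, f g * (ρ j).character g = 0 by simp [h]
      have key : ∀ i, (Nat.card G : ℂ)⁻¹ * ∑ g, (ρ j).character g * (ρ i).character g⁻¹ =
          if j = i then 1 else 0 := fun i => by
        have := hsimple i
        have := hsimple j
        rw [FDRep.char_orthonormal]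
        exact if_congr ⟨hpairwise _ _, fun h => h ▸ ⟨Iso.refl _⟩⟩ rfl rfl
      simp only [f, sub_mul, Finset.sum_sub_distrib, ite_mul, one_mul, zero_mul,
        Finset.sum_ite_eq', Finset.mem_univ, if_true]
      have : ∑ g, (Nat.card G : ℂ)⁻¹ * (∑ i, (ρ i).character 1 * (ρ i).character g⁻¹) *
          (ρ j).character g = ∑ i, (ρ i).character 1 * ((Nat.card G : ℂ)⁻¹ *
            ∑ g, (ρ j).character g * (ρ i).character g⁻¹) := by
        simp only [Finset.mul_sum, Finset.sum_mul]
        rw [Finset.sum_comm]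
        refine Finset.sum_congr rfl fun i _ => Finset.sum_congr rfl fun g _ => by ring
      rw [this]
      simp only [key]
      simp
    · intro g h
      have h1 : h * g * h⁻¹ = 1 ↔ g = 1 := conj_eq_one_iff
      simp only [f, mul_inv_rev, inv_inv, h1, ← mul_assoc]
      simp only [FDRep.char_conj]
  have := congrFun hf w⁻¹
  simp only [f, inv_eq_one, inv_inv, Pi.zero_apply] at this
  exact sub_eq_zero.1 this

end FrobAux

open CategoryTheory in
/-- The Generalized Frobenius Formula for `k = 1`: counting `2g`-tuples together with an
element `z` of a fixed conjugacy class `C` such that the product of the `g` commutators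
equals `z⁻¹`. -/
theorem frobenius_formula
    {G : Type} [Group G] [Fintype G] (C : ConjClasses G) (g : ℕ)
    (ι : Type) [Fintype ι] (ρ : ι → FDRep ℂ G)
    (hsimple : ∀ i, Simple (ρ i))
    (hpairwise : ∀ i j, Nonempty (ρ i ≅ ρ j) → i = j)
    (hcomplete : ∀ V : FDRep ℂ G, Simple V → ∃ i, Nonempty (V ≅ ρ i)) :
    (Nat.card {t : (Fin g → G) × (Fin g → G) × C.carrier //
        (List.ofFn fun i : Fin g =>
          t.1 i * t.2.1 i * (t.1 i)⁻¹ * (t.2.1 i)⁻¹).prod = (t.2.2 : G)⁻¹} : ℂ)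
      = (Nat.card G : ℂ) ^ (2 * (g : ℤ) - 1) * (Nat.card C.carrier : ℂ) *
        ∑ i, (ρ i).character (Quotient.out C) / ((ρ i).character 1) ^ (2 * (g : ℤ) - 1) := by
  classical
  have hG : (Nat.card G : ℂ) ≠ 0 := NeZero.ne _
  rw [Nat.card_eq_fintype_card, Fintype.card_subtype, Finset.card_filter]
  push_cast
  simp only [← mul_eq_one_iff_eq_inv]
  simp only [FrobAux.delta ι ρ hsimple hpairwise hcomplete]
  rw [← Finset.mul_sum, Finset.sum_comm, Finset.mul_sum, Finset.mul_sum]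
  refine Finset.sum_congr rfl fun i _ => ?_
  have := hsimple i
  have hd := FrobAux.deg_ne_zero (ρ i)
  have hC : ∀ z : C.carrier, (ρ i).character z = (ρ i).character (Quotient.out C) := fun z => by
    have h1 : ConjClasses.mk (z : G) = ConjClasses.mk (Quotient.out C) := by
      rw [ConjClasses.mem_carrier_iff_mk_eq.1 z.2]
      exact (Quotient.out_eq C).symm
    obtain ⟨c, hc⟩ := isConj_iff.1 (ConjClasses.mk_eq_mk_iff_isConj.1 h1)
    rw [← hc, FDRep.char_conj]
  have key : ∑ t : (Fin g → G) × (Fin g → G) × C.carrier, (ρ i).character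
      ((List.ofFn fun i : Fin g => t.1 i * t.2.1 i * (t.1 i)⁻¹ * (t.2.1 i)⁻¹).prod * t.2.2) =
      ((Nat.card G : ℂ) / (ρ i).character 1) ^ (2 * g) *
        (Nat.card C.carrier * (ρ i).character (Quotient.out C)) := by
    rw [← (((Equiv.arrowProdEquivProdArrow (Fin g) (fun _ => G) (fun _ => G)).prodCongr
        (Equiv.refl C.carrier)).trans (Equiv.prodAssoc _ _ _)).sum_comp, Fintype.sum_prod_type_right]
    have h2 : ∀ z : C.carrier, ∑ p : Fin g → G × G, (ρ i).character
        ((List.ofFn fun i => (p i).1 * (p i).2 * (p i).1⁻¹ * (p i).2⁻¹).prod * z) =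
        ((Nat.card G : ℂ) / (ρ i).character 1) ^ (2 * g) * (ρ i).character (Quotient.out C) := by
      intro z
      rw [← hC z]
      simp only [FDRep.character, map_mul _ (List.prod _) _]
      rw [← map_sum, ← Finset.sum_mul, FrobAux.list_sum, smul_mul_assoc, one_mul, map_smul]
      rfl
    refine (Finset.sum_congr rfl fun z _ => h2 z).trans ?_
    simp
    ring
  rw [← Finset.mul_sum, key, zpow_sub₀ hG, zpow_sub₀ hd]
  have e1 : (2 * (g : ℤ)) = ((2 * g : ℕ) : ℤ) := by push_cast; rfl
  rw [e1, zpow_natCast, zpow_natCast, div_pow]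
  field_simp
end

section
/- Let G be a finite group and M = (D, σ, α) a connected combinatorial map. Then, as an identity in ℂ, the number Ñ_G(M) of nowhere-identity G-flows on M equals Σ_{B ⊆ E(M)} (−1)^{|E(M)∖B|} · |G|^{|B|−|V(M)|} · ∏_{C} ( Σ_{λ ∈ Irr(G)} χ_λ(1)^{χ(C)} ), where the product runs over the components C of the spanning subgraph (V, B), χ(C) is the Euler characteristic of C, and all exponents are integers (possibly negative). -/
open Equiv

/-- The set of darts belonging to the edges in `B`. -/
def dartsIn {D : Type*} (α : Equiv.Perm D) (B : Set (Quotient α.cycleSetoid)) : Set D :=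
  {d | Quotient.mk α.cycleSetoid d ∈ B}

/-- The generating relation on vertices of the spanning subgraph `(V, B)`: for every dart `d`
of an edge in `B`, the `σ`-orbit of `d` is related to the `σ`-orbit of `α d`. -/
def spanningRel {D : Type*} (σ α : Equiv.Perm D) (B : Set (Quotient α.cycleSetoid)) :
    Quotient σ.cycleSetoid → Quotient σ.cycleSetoid → Prop := fun v w =>
  ∃ d : D, Quotient.mk α.cycleSetoid d ∈ B ∧
    Quotient.mk σ.cycleSetoid d = v ∧ Quotient.mk σ.cycleSetoid (α d) = w

open scoped Classical in
/-- The first-return map of a permutation `σ` on a subset `S`: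
`d ↦ σ^k d` for the least `k ≥ 1` with `σ^k d ∈ S` (and the identity if there is none). -/
noncomputable def firstReturn {D : Type*} (σ : Equiv.Perm D) (S : Set D) (d : D) : D :=
  if h : ∃ k, 0 < k ∧ (σ ^ k) d ∈ S then (σ ^ Nat.find h) d else d

/-- The number of orbits of `f` on the subset `S` (for `f` mapping `S` bijectively to
itself, the classes of the equivalence relation generated by `a ∼ f a` are the orbits). -/
noncomputable def orbitCountOn {D : Type*} (f : D → D) (S : Set D) : ℕ :=
  Nat.card (Quotient (Relation.EqvGen.setoid fun a b : S => f a = (b : D)))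

/-- The darts of edges in `B` whose `σ`-orbit lies in the component `C` of `(V, B)`. -/
def componentDarts {D : Type*} (σ α : Equiv.Perm D) (B : Set (Quotient α.cycleSetoid))
    (C : Quotient (Relation.EqvGen.setoid (spanningRel σ α B))) : Set D :=
  {d | Quotient.mk α.cycleSetoid d ∈ B ∧
    Quotient.mk (Relation.EqvGen.setoid (spanningRel σ α B))
      (Quotient.mk σ.cycleSetoid d) = C}

open scoped Classical in
/-- The Euler characteristic of a component `C` of the spanning subgraph `(V, B)`:
(number of `σ_B`-orbits) − (number of `α`-orbits) + (number of `σ_B∘α`-orbits) on the darts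
of `C`, and `2` for an isolated vertex. -/
noncomputable def componentEuler {D : Type*} (σ α : Equiv.Perm D)
    (B : Set (Quotient α.cycleSetoid))
    (C : Quotient (Relation.EqvGen.setoid (spanningRel σ α B))) : ℤ :=
  if (componentDarts σ α B C).Nonempty then
    (orbitCountOn (firstReturn σ (dartsIn α B)) (componentDarts σ α B C) : ℤ)
      - (orbitCountOn (⇑α) (componentDarts σ α B C) : ℤ)
      + (orbitCountOn (fun d => firstReturn σ (dartsIn α B) (α d))
          (componentDarts σ α B C) : ℤ)
  else 2


namespace GFlow
open CategoryTheory

lemma schur_zero {G : Type} [Group G] (V W : FDRep ℂ G) [Simple V] [Simple W]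
    (h : ¬ Nonempty (V ≅ W)) (f : V →ₗ[ℂ] W) (hf : ∀ g, f ∘ₗ V.ρ g = W.ρ g ∘ₗ f) : f = 0 := by
  classical
  have h1 := FDRep.finrank_hom_simple_simple V W
  rw [if_neg h] at h1
  have hs : Subsingleton (V ⟶ W) := Module.finrank_zero_iff.mp h1
  let F : V ⟶ W := ⟨InducedCategory.homMk (ModuleCat.ofHom f), fun g ↦ by
    ext1
    simp only [FGModuleCat.obj_carrier]
    ext x
    exact LinearMap.congr_fun (hf g) x⟩
  have : F = 0 := Subsingleton.elim _ _
  have h2 := congrArg (fun F : V ⟶ W => F.hom.hom.hom) this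
  exact h2

lemma schur_scalar {G : Type} [Group G] (V : FDRep ℂ G) [Simple V]
    (f : V →ₗ[ℂ] V) (hf : ∀ g, f ∘ₗ V.ρ g = V.ρ g ∘ₗ f) : ∃ c : ℂ, f = c • LinearMap.id := by
  classical
  let F : V ⟶ V := ⟨InducedCategory.homMk (ModuleCat.ofHom f), fun g ↦ by
    ext1
    simp only [FGModuleCat.obj_carrier]
    ext x
    exact LinearMap.congr_fun (hf g) x⟩
  obtain ⟨c, hc⟩ := endomorphism_simple_eq_smul_id ℂ F
  refine ⟨c, ?_⟩
  have h2 := congrArg (fun F : V ⟶ V => F.hom.hom.hom) hc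
  exact h2.symm

/-- A group-algebra element killing all simple `FDRep`s kills every simple module. -/
lemma smul_eq_zero_of_kills {G : Type} [Group G] [Fintype G] (f : G → ℂ)
    (hf : ∀ V : FDRep ℂ G, Simple V → ∑ g, f g • V.ρ g = 0)
    (M : Type) [AddCommGroup M] [Module ℂ M] [Module (MonoidAlgebra ℂ G) M]
    [IsScalarTower ℂ (MonoidAlgebra ℂ G) M]
    [IsSimpleModule (MonoidAlgebra ℂ G) M] (x : M) :
    (∑ g, MonoidAlgebra.single g (f g) : MonoidAlgebra ℂ G) • x = 0 := by
  classical
  have hfin : Module.Finite (MonoidAlgebra ℂ G) M := inferInstance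
  have hfin2 : Module.Finite ℂ (MonoidAlgebra ℂ G) := inferInstance
  have hfin' : Module.Finite ℂ M :=
    Module.Finite.trans (R := ℂ) (MonoidAlgebra ℂ G) M
  let τ : Representation ℂ G M := Representation.ofModule' M
  have hτ : ∀ (r : MonoidAlgebra ℂ G) (y : M), τ.asAlgebraHom r y = r • y := by
    intro r y
    have : τ.asAlgebraHom = Algebra.lsmul ℂ ℂ M := by
      exact (MonoidAlgebra.lift ℂ (M →ₗ[ℂ] M) G).apply_symm_apply (Algebra.lsmul ℂ ℂ M)
    rw [this]; rfl
  let e : τ.asModule ≃ₗ[MonoidAlgebra ℂ G] M :=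
    { τ.asModuleEquiv with
      map_smul' := fun r y => by
        show τ.asModuleEquiv (r • y) = r • τ.asModuleEquiv y
        rw [Representation.asModuleEquiv_map_smul, hτ] }
  have hirr : τ.IsIrreducible := by
    rw [Representation.irreducible_iff_isSimpleModule_asModule]
    exact IsSimpleModule.congr e
  have hS : Simple (FDRep.of τ) := by
    rw [FDRep.simple_iff_char_is_norm_one]
    have := invertibleOfNonzero (NeZero.ne (Nat.card G : ℂ))
    have h := Representation.char_orthonormal τ τ
    rw [if_pos ⟨Representation.Equiv.refl _⟩, inv_mul_eq_one₀ (NeZero.ne _)] at h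
    exact h.symm
  have h2 := hf _ hS
  rw [FDRep.of_ρ'] at h2
  rw [← hτ, map_sum]
  have h3 : ∑ g, τ.asAlgebraHom (MonoidAlgebra.single g (f g)) = ∑ g, f g • τ g := by
    simp [Representation.asAlgebraHom_single]
  rw [h3, h2]; rfl

/-- an element of group algebra (as function) killing all simples is zero -/
lemma eq_zero_of_kills {G : Type} [Group G] [Fintype G] (f : G → ℂ)
    (hf : ∀ V : FDRep ℂ G, Simple V → ∑ g, f g • V.ρ g = 0) (g₀ : G) : f g₀ = 0 := by
  classical
  set a : MonoidAlgebra ℂ G := ∑ g, MonoidAlgebra.single g (f g) with hadef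
  have ha : a ∈ Module.jacobson (MonoidAlgebra ℂ G) (MonoidAlgebra ℂ G) := by
    rw [Module.jacobson, Submodule.mem_sInf]
    intro m hm
    have hm' : IsCoatom m := hm
    have hsimp : IsSimpleModule (MonoidAlgebra ℂ G) (MonoidAlgebra ℂ G ⧸ m) :=
      isSimpleModule_iff_isCoatom.mpr hm'
    have h := smul_eq_zero_of_kills f hf (MonoidAlgebra ℂ G ⧸ m) (Submodule.Quotient.mk 1)
    rw [← hadef, ← Submodule.Quotient.mk_smul, Submodule.Quotient.mk_eq_zero] at h
    simpa using h
  rw [IsSemisimpleModule.jacobson_eq_bot] at ha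
  have ha' : a = 0 := ha
  have := congrArg (fun x : MonoidAlgebra ℂ G => x.coeff g₀) ha'
  simpa [hadef, MonoidAlgebra.coeff_sum, Finsupp.single_apply] using this

lemma avg_intertwines {G : Type} [Group G] [Fintype G] (V W : FDRep ℂ G) (T : W →ₗ[ℂ] V) (h : G) :
    (∑ g, V.ρ g ∘ₗ T ∘ₗ W.ρ g⁻¹) ∘ₗ W.ρ h = V.ρ h ∘ₗ (∑ g, V.ρ g ∘ₗ T ∘ₗ W.ρ g⁻¹) := by
  have e1 : (∑ g, V.ρ g ∘ₗ T ∘ₗ W.ρ g⁻¹) ∘ₗ W.ρ h = ∑ g, (V.ρ g ∘ₗ T ∘ₗ W.ρ g⁻¹) ∘ₗ W.ρ h := by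
    ext x; simp [LinearMap.sum_apply]
  have e2 : V.ρ h ∘ₗ (∑ g, V.ρ g ∘ₗ T ∘ₗ W.ρ g⁻¹) = ∑ g, V.ρ h ∘ₗ (V.ρ g ∘ₗ T ∘ₗ W.ρ g⁻¹) := by
    ext x; simp [LinearMap.sum_apply]
  rw [e1, e2, ← Equiv.sum_comp (Equiv.mulLeft h)]
  refine Finset.sum_congr rfl fun g _ => ?_
  ext x
  simp only [Equiv.coe_mulLeft, LinearMap.comp_apply, mul_inv_rev, map_mul, Module.End.mul_apply]
  congr 4
  rw [← Module.End.mul_apply, ← map_mul]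
  simp

/-- the matrix form of a representation in a basis -/
noncomputable def matRep {G : Type} [Group G] (V : FDRep ℂ G) {m : Type} [Fintype m] [DecidableEq m]
    (b : Module.Basis m ℂ V) : G →* Matrix m m ℂ :=
  (LinearMap.toMatrixAlgEquiv b).toRingEquiv.toRingHom.toMonoidHom.comp V.ρ

lemma matRep_apply {G : Type} [Group G] (V : FDRep ℂ G) {m : Type} [Fintype m] [DecidableEq m]
    (b : Module.Basis m ℂ V) (g : G) : matRep V b g = LinearMap.toMatrix b b (V.ρ g) := rfl

lemma avg_entry {G : Type} [Group G] [Fintype G] (V W : FDRep ℂ G)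
    {m m' : Type} [Fintype m] [DecidableEq m] [Fintype m'] [DecidableEq m']
    (b : Module.Basis m ℂ V) (c : Module.Basis m' ℂ W) (a k : m) (l d : m') :
    LinearMap.toMatrix c b (∑ g, V.ρ g ∘ₗ (Matrix.toLin c b (Matrix.single k l 1)) ∘ₗ W.ρ g⁻¹) a d
     = ∑ g, matRep V b g a k * matRep W c g⁻¹ l d := by
  rw [map_sum, Matrix.sum_apply]
  refine Finset.sum_congr rfl fun g _ => ?_
  rw [LinearMap.toMatrix_comp c b b, LinearMap.toMatrix_comp c c b, LinearMap.toMatrix_toLin,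
    ← matRep_apply, ← matRep_apply, Matrix.mul_apply]
  simp only [Matrix.mul_apply, Matrix.single_apply]
  simp [ite_and]

lemma orth_ne {G : Type} [Group G] [Fintype G] (V W : FDRep ℂ G) [Simple V] [Simple W]
    (h : ¬ Nonempty (W ≅ V))
    {m m' : Type} [Fintype m] [DecidableEq m] [Fintype m'] [DecidableEq m']
    (b : Module.Basis m ℂ V) (c : Module.Basis m' ℂ W) (a k : m) (l d : m') :
    ∑ g, matRep V b g a k * matRep W c g⁻¹ l d = 0 := by
  rw [← avg_entry, schur_zero W V h _ (fun g => avg_intertwines V W _ g)]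
  simp

lemma orth_eq {G : Type} [Group G] [Fintype G] (V : FDRep ℂ G) [Simple V]
    {m : Type} [Fintype m] [DecidableEq m] 
    (b : Module.Basis m ℂ V) (a k l d : m) :
    ∑ g, matRep V b g a k * matRep V b g⁻¹ l d =
      if a = d ∧ k = l then (Fintype.card G : ℂ) / (Fintype.card m : ℂ) else 0 := by
  obtain ⟨c, hc⟩ := schur_scalar V _
    (fun g => avg_intertwines V V (Matrix.toLin b b (Matrix.single k l 1)) g)
  have key : ∀ a d, ∑ g, matRep V b g a k * matRep V b g⁻¹ l d = if a = d then c else 0 := by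
    intro a d
    rw [← avg_entry, hc]
    simp [LinearMap.toMatrix_id, Matrix.one_apply]
  have tr : (Fintype.card m : ℂ) * c = if k = l then (Fintype.card G : ℂ) else 0 := by
    have h1 : ∑ a, ∑ g, matRep V b g a k * matRep V b g⁻¹ l a = Fintype.card m * c := by
      simp [key]
    rw [← h1, Finset.sum_comm]
    have : ∀ g, ∑ a, matRep V b g a k * matRep V b g⁻¹ l a = if k = l then 1 else 0 := by
      intro g
      have h2 : (matRep V b g⁻¹ * matRep V b g) l k = if k = l then 1 else 0 := by
        rw [← map_mul]; simp [Matrix.one_apply, eq_comm]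
      rw [← h2, Matrix.mul_apply]
      exact Finset.sum_congr rfl fun a _ => mul_comm _ _
    simp [this]
  have hm : (Fintype.card m : ℂ) ≠ 0 := by
    have : Nonempty m := ⟨a⟩
    simp
  rw [key]
  by_cases h1 : a = d <;> by_cases h2 : k = l <;> simp [h1, h2] at tr ⊢
  · rw [eq_div_iff hm, mul_comm]; exact tr
  · rcases tr with h | h
    · exact absurd (by exact_mod_cast h) hm
    · exact h

lemma trace_matRep {G : Type} [Group G] (V : FDRep ℂ G)
    {m : Type} [Fintype m] [DecidableEq m]
    (b : Module.Basis m ℂ V) (g : G) : V.character g = ∑ a, matRep V b g a a := by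
  rw [FDRep.character, LinearMap.trace_eq_matrix_trace ℂ b]
  rfl

lemma fdrep_finrank_ne_zero {G : Type} [Group G] (V : FDRep ℂ G) [Simple V] :
    Module.finrank ℂ V ≠ 0 := by
  intro h
  have hs : Subsingleton V := Module.finrank_zero_iff.mp h
  apply id_nonzero V
  ext x
  exact Subsingleton.elim (α := V) _ _

/-- sum over g of `f g • ρ g` in terms of characters -/
lemma sum_char_smul {G : Type} [Group G] [Fintype G] (V W : FDRep ℂ G) [Simple V] [Simple W]
    [Decidable (Nonempty (W ≅ V))] :
    ∑ g, V.character g⁻¹ • W.ρ g = if Nonempty (W ≅ V) then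
      ((Fintype.card G : ℂ) / Module.finrank ℂ W) • (LinearMap.id : W →ₗ[ℂ] W) else 0 := by
  classical
  have key : ∀ V : FDRep ℂ G, ∀ b : Module.Basis (Fin (Module.finrank ℂ V)) ℂ V,
    ∀ a k, (LinearMap.toMatrix (Module.finBasis ℂ W) (Module.finBasis ℂ W)) 
      (∑ g, V.character g⁻¹ • W.ρ g) a k = 
      ∑ l, ∑ g, matRep W (Module.finBasis ℂ W) g a k * matRep V b g⁻¹ l l := by
    intro V b a k
    rw [map_sum, Matrix.sum_apply, Finset.sum_comm]
    refine Finset.sum_congr rfl fun g _ => ?_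
    rw [map_smul, Matrix.smul_apply, ← matRep_apply, trace_matRep V b, smul_eq_mul, mul_comm,
      Finset.mul_sum]
  split_ifs with h
  · rw [FDRep.char_iso h.some.symm]
    apply (LinearMap.toMatrix (Module.finBasis ℂ W) (Module.finBasis ℂ W)).injective
    ext a k
    rw [key W (Module.finBasis ℂ W)]
    simp only [orth_eq, map_smul, LinearMap.toMatrix_id, Matrix.smul_apply, Matrix.one_apply]
    simp [ite_and, eq_comm]
  · apply (LinearMap.toMatrix (Module.finBasis ℂ W) (Module.finBasis ℂ W)).injective
    ext a k
    have h' : ¬ Nonempty (V ≅ W) := fun ⟨e⟩ => h ⟨e.symm⟩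
    rw [key V (Module.finBasis ℂ V)]
    simp [orth_ne W V h']

lemma sum_dim_char {G : Type} [Group G] [Fintype G] [DecidableEq G]
    (ι : Type) [Fintype ι] (ρ : ι → FDRep ℂ G)
    (hsimple : ∀ i, Simple (ρ i))
    (hpairwise : ∀ i j, Nonempty (ρ i ≅ ρ j) → i = j)
    (hcomplete : ∀ V : FDRep ℂ G, Simple V → ∃ i, Nonempty (V ≅ ρ i)) (g : G) :
    ∑ i, (Module.finrank ℂ (ρ i) : ℂ) * (ρ i).character g =
      if g = 1 then (Fintype.card G : ℂ) else 0 := by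
  classical
  have h := eq_zero_of_kills (fun g : G => (∑ i, (Module.finrank ℂ (ρ i) : ℂ) * (ρ i).character g⁻¹) -
      if g = 1 then (Fintype.card G : ℂ) else 0) ?_ g⁻¹
  · rw [sub_eq_zero] at h
    simpa using h
  · intro V hV
    obtain ⟨i₀, ⟨e⟩⟩ := hcomplete V hV
    simp only [sub_smul, Finset.sum_sub_distrib, Finset.sum_smul]
    rw [Finset.sum_comm]
    simp only [mul_smul, ← Finset.smul_sum, sum_char_smul]
    rw [Finset.sum_eq_single i₀]
    · rw [if_pos ⟨e⟩]
      have : Module.finrank ℂ V = Module.finrank ℂ (ρ i₀) :=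
        LinearEquiv.finrank_eq (FDRep.isoToLinearEquiv e)
      rw [this, smul_smul, mul_div_cancel₀]
      · ext x
        simp [ite_smul]
      · exact_mod_cast fdrep_finrank_ne_zero _
    · intro j _ hj
      rw [if_neg, smul_zero]
      rintro ⟨e'⟩
      exact hj (hpairwise j i₀ ⟨e'.symm ≪≫ e⟩)
    · simp

/-- the block-diagonal sum of the representations `ρ i` -/
noncomputable def bigRep {G : Type} [Group G] (ι : Type) [Fintype ι] [DecidableEq ι]
    (ρ : ι → FDRep ℂ G) :
    G →* Matrix (Σ i, Fin (Module.finrank ℂ (ρ i))) (Σ i, Fin (Module.finrank ℂ (ρ i))) ℂ where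
  toFun g := Matrix.blockDiagonal' (fun i => matRep (ρ i) (Module.finBasis ℂ (ρ i)) g)
  map_one' := by
    rw [← Matrix.blockDiagonal'_one]
    congr 1
    funext i
    simp
  map_mul' g h := by
    rw [← Matrix.blockDiagonal'_mul]
    congr 1
    funext i
    simp

lemma bigRep_apply {G : Type} [Group G] (ι : Type) [Fintype ι] [DecidableEq ι]
    (ρ : ι → FDRep ℂ G) (g : G) : bigRep ι ρ g =
      Matrix.blockDiagonal' (fun i => matRep (ρ i) (Module.finBasis ℂ (ρ i)) g) := rfl

lemma exists_big_rep {G : Type} [Group G] [Fintype G] [DecidableEq G]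
    (ι : Type) [Fintype ι] [DecidableEq ι] (ρ : ι → FDRep ℂ G)
    (hsimple : ∀ i, Simple (ρ i))
    (hpairwise : ∀ i j, Nonempty (ρ i ≅ ρ j) → i = j)
    (hcomplete : ∀ V : FDRep ℂ G, Simple V → ∃ i, Nonempty (V ≅ ρ i)) :
    ∃ n : ι → ℕ, (∀ i, (ρ i).character 1 = n i) ∧ (∀ i, n i ≠ 0) ∧
      ∃ R : G →* Matrix (Σ i, Fin (n i)) (Σ i, Fin (n i)) ℂ,
        (∀ g, ∑ x, (n x.1 : ℂ) * R g x x = if g = 1 then (Fintype.card G : ℂ) else 0) ∧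
        (∀ x y z w, ∑ g, R g x y * R g⁻¹ z w =
          if x = w ∧ y = z ∧ x.1 = y.1 then (Fintype.card G : ℂ) / n x.1 else 0) := by
  refine ⟨fun i => Module.finrank ℂ (ρ i), fun i => FDRep.char_one _,
    fun i => fdrep_finrank_ne_zero _, bigRep ι ρ, ?_, ?_⟩
  · intro g
    rw [← sum_dim_char ι ρ hsimple hpairwise hcomplete g, Fintype.sum_sigma]
    refine Finset.sum_congr rfl fun i _ => ?_
    rw [trace_matRep _ (Module.finBasis ℂ (ρ i)), Finset.mul_sum]
    simp [bigRep_apply]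
  · rintro ⟨i, a⟩ ⟨j, b⟩ ⟨k, c⟩ ⟨l, d⟩
    simp only [bigRep_apply]
    by_cases hij : i = j
    swap
    · simp [Matrix.blockDiagonal'_apply, hij]
    subst hij
    by_cases hkl : k = l
    swap
    · simp only [Matrix.blockDiagonal'_apply_ne _ _ _ hkl,
        mul_zero, Finset.sum_const_zero]
      rw [if_neg]
      rintro ⟨h1, h2, -⟩
      apply hkl
      exact (congrArg Sigma.fst h2).symm.trans (congrArg Sigma.fst h1)
    subst hkl
    by_cases hik : i = k
    · subst hik
      simp [orth_eq]
    · have h' : ¬ Nonempty (ρ k ≅ ρ i) := fun h => hik (hpairwise _ _ h).symm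
      simp [hik, orth_ne _ _ h']
end GFlow
namespace GFlow

lemma list_prod_expand {I : Type} [Fintype I] [DecidableEq I] : ∀ (m : ℕ)
    (A : Fin (m+1) → Matrix I I ℂ) (x y : I),
    (List.ofFn A).prod x y = ∑ f : Fin m → I, ∏ j : Fin (m+1),
      A j ((Fin.cons x f : Fin (m+1) → I) j) ((Fin.snoc f y : Fin (m+1) → I) j) := by
  intro m
  induction m with
  | zero =>
    intro A x y
    simp [Fin.snoc]
  | succ m ih =>
    intro A x y
    rw [List.ofFn_succ, List.prod_cons, Matrix.mul_apply]
    simp_rw [ih]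
    rw [← (Fin.consEquiv (fun _ : Fin (m+1) => I)).sum_comp, Fintype.sum_prod_type]
    refine Finset.sum_congr rfl fun z _ => ?_
    rw [Finset.mul_sum]
    refine Finset.sum_congr rfl fun f _ => ?_
    rw [Fin.prod_univ_succ (n := m+1)]
    simp only [Fin.consEquiv_apply, Fin.cons_succ, Fin.cons_zero]
    have hc : (Fin.snoc ((Fin.consEquiv fun _ : Fin (m+1) => I) (z, f)) y : Fin (m+1+1) → I) =
        Fin.cons z (Fin.snoc f y : Fin (m+1) → I) :=
      (Fin.cons_snoc_eq_snoc_cons (β := I) z f y).symm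
    rw [hc]
    simp only [Fin.cons_succ, Fin.cons_zero]

lemma trace_expand {I : Type} [Fintype I] [DecidableEq I] (m : ℕ)
    (A : Fin (m+1) → Matrix I I ℂ) (w : I → ℂ) :
    ∑ x, w x * (List.ofFn A).prod x x = ∑ f : Fin (m+1) → I, w (f 0) * ∏ j : Fin (m+1),
      A j (f j) (f (j+1)) := by
  rw [← (Fin.consEquiv (fun _ : Fin (m+1) => I)).sum_comp, Fintype.sum_prod_type]
  refine Finset.sum_congr rfl fun x _ => ?_
  rw [list_prod_expand, Finset.mul_sum]
  refine Finset.sum_congr rfl fun f _ => ?_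
  simp only [Fin.consEquiv_apply, Fin.cons_zero]
  congr 1
  refine Finset.prod_congr rfl fun j _ => ?_
  congr 1
  induction j using Fin.lastCases with
  | last => simp
  | cast j => simp

section
variable {D : Type} [Fintype D] (σ : Equiv.Perm D)

lemma minPer_pos (d : D) : 0 < Function.minimalPeriod σ d :=
  Function.minimalPeriod_pos_of_mem_periodicPts
    (Function.Injective.mem_periodicPts σ.injective d)

lemma aroundProd_step {G : Type*} [Group G] (κ : D → G) (d : D) :
    aroundProd σ κ (σ d) = (κ d)⁻¹ * aroundProd σ κ d * κ d := by
  obtain ⟨m, hm⟩ := Nat.exists_eq_succ_of_ne_zero (minPer_pos σ d).ne'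
  have hm' : Function.minimalPeriod σ (σ d) = m + 1 := by
    rw [Function.minimalPeriod_apply (Function.Injective.mem_periodicPts σ.injective d), hm]
  have hper : (σ ^ (m+1)) d = d := by
    rw [← Equiv.Perm.iterate_eq_pow, ← Nat.succ_eq_add_one, ← hm]
    exact Function.iterate_minimalPeriod
  rw [aroundProd, aroundProd, hm, hm']
  nth_rewrite 1 [List.range_succ]
  rw [Nat.succ_eq_add_one, List.range_succ_eq_map]
  simp only [List.map_append, List.prod_append, List.map_cons, List.prod_cons, List.map_map,
    List.map_nil, List.prod_nil, mul_one, pow_zero, Equiv.Perm.one_apply]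
  rw [← mul_assoc, inv_mul_cancel, one_mul]
  congr 1
  rw [← Equiv.Perm.mul_apply, ← pow_succ, hper]

lemma aroundProd_eq_one_of_sameCycle {G : Type*} [Group G] (κ : D → G) {d d' : D}
    (h : σ.SameCycle d d') (hd : aroundProd σ κ d = 1) : aroundProd σ κ d' = 1 := by
  classical
  obtain ⟨n, -, -, rfl⟩ := h.exists_pow_eq
  clear h
  induction n with
  | zero => simpa
  | succ n ih =>
    rw [pow_succ', Equiv.Perm.mul_apply, aroundProd_step, ih]
    simp

/-- number of elements minus one in an orbit -/
noncomputable def per (v : Quotient σ.cycleSetoid) : ℕ := Function.minimalPeriod σ v.out - 1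

lemma per_succ (v : Quotient σ.cycleSetoid) : per σ v + 1 = Function.minimalPeriod σ v.out :=
  Nat.sub_add_cancel (minPer_pos σ _)

lemma mk_pow (n : ℕ) (d : D) : (Quotient.mk σ.cycleSetoid ((σ ^ n) d)) = Quotient.mk _ d :=
  Quotient.sound (s := σ.cycleSetoid) (show σ.SameCycle _ _ from by
    simpa using Equiv.Perm.SameCycle.refl σ d)

/-- enumeration of the darts along the orbits -/
noncomputable def orbEquiv : (Σ v : Quotient σ.cycleSetoid, Fin (per σ v + 1)) ≃ D :=
  Equiv.ofBijective (fun p => (σ ^ (p.2 : ℕ)) p.1.out) <| by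
    constructor
    · rintro ⟨v, j⟩ ⟨v', j'⟩ h
      simp only at h
      have hv : v = v' := by
        have := congrArg (Quotient.mk σ.cycleSetoid) h
        rw [mk_pow, mk_pow, Quotient.out_eq, Quotient.out_eq] at this
        exact this
      subst hv
      have hj : (j : ℕ) = j' := by
        rw [← Equiv.Perm.iterate_eq_pow, ← Equiv.Perm.iterate_eq_pow] at h
        refine (Function.iterate_eq_iterate_iff_of_lt_minimalPeriod ?_ ?_).mp h
        · rw [← per_succ]; exact j.2
        · rw [← per_succ]; exact j'.2
      rw [Fin.ext hj]
    · intro d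
      have h : σ.SameCycle (Quotient.mk σ.cycleSetoid d).out d :=
        Quotient.exact (s := σ.cycleSetoid) (Quotient.out_eq _)
      classical
      obtain ⟨n, -, -, hn⟩ := h.exists_pow_eq
      refine ⟨⟨Quotient.mk _ d, ⟨n % Function.minimalPeriod σ (Quotient.mk σ.cycleSetoid d).out, ?_⟩⟩, ?_⟩
      · rw [per_succ]; exact Nat.mod_lt _ (minPer_pos σ _)
      · show (σ ^ (n % Function.minimalPeriod σ (Quotient.mk σ.cycleSetoid d).out))
          (Quotient.mk σ.cycleSetoid d).out = d
        rw [← Equiv.Perm.iterate_eq_pow, Function.iterate_mod_minimalPeriod_eq,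
          Equiv.Perm.iterate_eq_pow, hn]

lemma orbEquiv_apply (v : Quotient σ.cycleSetoid) (j : Fin (per σ v + 1)) :
    orbEquiv σ ⟨v, j⟩ = (σ ^ (j : ℕ)) v.out := rfl

lemma orbEquiv_succ (v : Quotient σ.cycleSetoid) (j : Fin (per σ v + 1)) :
    orbEquiv σ ⟨v, j + 1⟩ = σ (orbEquiv σ ⟨v, j⟩) := by
  rw [orbEquiv_apply, orbEquiv_apply, ← Equiv.Perm.mul_apply, ← pow_succ']
  induction j using Fin.lastCases with
  | last =>
    simp only [Fin.last_add_one, Fin.val_zero, pow_zero, Fin.val_last, Equiv.Perm.one_apply]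
    rw [per_succ, ← Equiv.Perm.iterate_eq_pow]
    exact (Function.iterate_minimalPeriod).symm
  | cast j => simp

lemma aroundProd_map {G : Type*} [Group G] {I : Type} [Fintype I] [DecidableEq I]
    (R : G →* Matrix I I ℂ) (κ : D → G) (v : Quotient σ.cycleSetoid) :
    R (aroundProd σ κ v.out) =
      (List.ofFn fun j : Fin (per σ v + 1) => R (κ (orbEquiv σ ⟨v, j⟩))).prod := by
  rw [aroundProd, map_list_prod, List.map_map, ← per_succ, List.ofFn_eq_map]
  congr 1
  rw [← List.map_coe_finRange_eq_range, List.map_map]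
  rfl

open scoped Classical in
lemma prod_trace_expand {G : Type*} [Group G] {I : Type} [Fintype I] [DecidableEq I]
    (R : G →* Matrix I I ℂ) (κ : D → G) (w : I → ℂ) :
    ∏ v : Quotient σ.cycleSetoid, ∑ x, w x * R (aroundProd σ κ v.out) x x =
      ∑ i : D → I, (∏ v : Quotient σ.cycleSetoid, w (i v.out)) * ∏ d, R (κ d) (i d) (i (σ d)) := by
  simp_rw [aroundProd_map, trace_expand]
  rw [Finset.prod_univ_sum, Fintype.piFinset_univ]
  let E : (D → I) ≃ ((v : Quotient σ.cycleSetoid) → Fin (per σ v + 1) → I) :=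
    ((orbEquiv σ).symm.arrowCongr (Equiv.refl I)).trans (Equiv.piCurry (fun _ _ => I))
  have hE : ∀ (i : D → I) v j, E i v j = i (orbEquiv σ ⟨v, j⟩) := fun i v j => rfl
  rw [← E.sum_comp]
  refine Finset.sum_congr rfl fun i _ => ?_
  rw [Finset.prod_mul_distrib]
  congr 1
  rw [← (orbEquiv σ).prod_comp, Fintype.prod_sigma]
  refine Finset.prod_congr rfl fun v _ => Finset.prod_congr rfl fun j _ => ?_
  rw [hE, hE, orbEquiv_succ]
end
end GFlow
namespace GFlow
section
variable {D : Type} (α : Equiv.Perm D) (hinv : ∀ d, α (α d) = d) (hfpf : ∀ d, α d ≠ d)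
include hinv

lemma sameCycle_inv {d d' : D} (h : α.SameCycle d d') : d' = d ∨ d' = α d := by
  have h2 : α * α = 1 := by ext d; simp [hinv]
  obtain ⟨n, rfl⟩ := h
  obtain ⟨k, rfl | rfl⟩ := Int.even_or_odd' n
  · left
    rw [zpow_mul, zpow_ofNat, pow_two, h2, one_zpow]; rfl
  · right
    rw [zpow_add, zpow_mul, zpow_ofNat, pow_two, h2, one_zpow]; simp

lemma edge_cases (d : D) : d = (Quotient.mk α.cycleSetoid d).out ∨
    d = α (Quotient.mk α.cycleSetoid d).out :=
  sameCycle_inv α hinv (Quotient.exact (s := α.cycleSetoid) (Quotient.out_eq _))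

omit hinv in
lemma mk_alpha (d : D) : Quotient.mk α.cycleSetoid (α d) = Quotient.mk α.cycleSetoid d :=
  Quotient.sound (s := α.cycleSetoid) (show α.SameCycle _ _ from by
    simpa using Equiv.Perm.SameCycle.refl α d)

omit hinv in
lemma mk_alpha_out (e : Quotient α.cycleSetoid) : Quotient.mk α.cycleSetoid (α e.out) = e := by
  rw [mk_alpha, Quotient.out_eq]

include hfpf

/-- each edge consists of two darts -/
noncomputable def edgeEquiv : (Quotient α.cycleSetoid × Bool) ≃ D :=
  Equiv.ofBijective (fun p => if p.2 then α p.1.out else p.1.out) <| by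
    constructor
    · rintro ⟨e, b⟩ ⟨e', b'⟩ h
      have he : e = e' := by
        have := congrArg (Quotient.mk α.cycleSetoid) h
        cases b <;> cases b' <;> simpa [mk_alpha_out] using this
      subst he
      cases b <;> cases b' <;> simp at h ⊢
      · exact hfpf _ h.symm
      · exact hfpf _ h
    · intro d
      rcases edge_cases α hinv d with h | h
      · exact ⟨⟨Quotient.mk _ d, false⟩, by simpa using h.symm⟩
      · exact ⟨⟨Quotient.mk _ d, true⟩, by simpa using h.symm⟩

open scoped Classical in
lemma prod_darts [Fintype D] (f : D → ℂ) :
    ∏ d, f d = ∏ e : Quotient α.cycleSetoid, f e.out * f (α e.out) := by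
  rw [← (edgeEquiv α hinv hfpf).prod_comp, Fintype.prod_prod_type]
  refine Finset.prod_congr rfl fun e _ => ?_
  rw [Fintype.prod_bool, mul_comm]
  rfl

open scoped Classical in
lemma sum_labellings [Fintype D] {G : Type} [Group G] [Fintype G]
    (B : Set (Quotient α.cycleSetoid)) (f : D → G → ℂ) :
    ∑ κ : D → G with IsGLabelling α κ ∧ ∀ d, Quotient.mk α.cycleSetoid d ∉ B → κ d = 1,
      ∏ d, f d (κ d) =
    ∏ e : Quotient α.cycleSetoid, ∑ g ∈ (if e ∈ B then Finset.univ else {1} : Finset G),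
      f e.out g * f (α e.out) g⁻¹ := by
  rw [Finset.prod_univ_sum]
  refine Finset.sum_bij' (fun κ _ => fun e => κ e.out)
    (fun h _ => fun d => if d = (Quotient.mk α.cycleSetoid d).out then h (Quotient.mk _ d)
      else (h (Quotient.mk _ d))⁻¹) ?_ ?_ ?_ ?_ ?_
  · intro κ hκ
    simp only [Finset.mem_filter, Finset.mem_univ, true_and] at hκ
    rw [Fintype.mem_piFinset]
    intro e
    split_ifs with he
    · simp
    · rw [Finset.mem_singleton]
      apply hκ.2
      rwa [Quotient.out_eq]
  · intro h hh
    rw [Fintype.mem_piFinset] at hh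
    simp only [Finset.mem_filter, Finset.mem_univ, true_and]
    constructor
    · intro d
      simp only [mk_alpha]
      rcases edge_cases α hinv d with h1 | h1
      · have h2 : ¬ α d = (Quotient.mk α.cycleSetoid d).out := by
          rw [← h1]; exact hfpf d
        rw [if_neg h2, if_pos h1]
      · have h2 : α d = (Quotient.mk α.cycleSetoid d).out := by
          conv_lhs => rw [h1]
          exact hinv _
        have h3 : ¬ d = (Quotient.mk α.cycleSetoid d).out := by
          rw [← h2]; exact (hfpf d).symm
        rw [if_pos h2, if_neg h3, inv_inv]
    · intro d hd
      have := hh (Quotient.mk _ d)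
      rw [if_neg hd, Finset.mem_singleton] at this
      simp [this]
  · intro κ hκ
    simp only [Finset.mem_filter, Finset.mem_univ, true_and] at hκ
    funext d
    dsimp only
    split_ifs with h1
    · rw [← h1]
    · have h2 := (edge_cases α hinv d).resolve_left h1
      conv_rhs => rw [h2, hκ.1]
  · intro h hh
    funext e
    simp [Quotient.out_eq]
  · intro κ hκ
    simp only [Finset.mem_filter, Finset.mem_univ, true_and] at hκ
    rw [prod_darts α hinv hfpf]
    refine Finset.prod_congr rfl fun e _ => ?_
    rw [hκ.1]
end
end GFlow
namespace GFlow
section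
variable {D : Type} (σ α : Equiv.Perm D) (hinv : ∀ d, α (α d) = d) (hfpf : ∀ d, α d ≠ d)

open scoped Classical in
/-- `α` restricted to the darts of `B`, identity elsewhere -/
noncomputable def alphaB (B : Set (Quotient α.cycleSetoid)) : Equiv.Perm D :=
  Function.Involutive.toPerm
    (fun d => if Quotient.mk α.cycleSetoid d ∈ B then α d else d) (by
      intro d
      by_cases h : Quotient.mk α.cycleSetoid d ∈ B
      · simp [h, mk_alpha, hinv]
      · simp [h])

lemma alphaB_mem (B : Set (Quotient α.cycleSetoid)) {d : D} (h : Quotient.mk α.cycleSetoid d ∈ B) :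
    alphaB α hinv B d = α d := by
  exact if_pos h

lemma alphaB_not_mem (B : Set (Quotient α.cycleSetoid)) {d : D}
    (h : Quotient.mk α.cycleSetoid d ∉ B) :
    alphaB α hinv B d = d := by
  exact if_neg h

/-- the face permutation of the spanning submap -/
noncomputable def tauB (B : Set (Quotient α.cycleSetoid)) : Equiv.Perm D :=
  σ * alphaB α hinv B

/-- conditions on an index function -/
def Good {ι : Type} {n : ι → ℕ} (B : Set (Quotient α.cycleSetoid))
    (i : D → Σ j, Fin (n j)) : Prop :=
  ∀ d, i (tauB σ α hinv B d) = i d ∧ (i (σ d)).1 = (i d).1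

include hfpf
open scoped Classical in
lemma edge_factor {G : Type} [Group G] [Fintype G]
    {ι : Type} [Fintype ι] (n : ι → ℕ)
    (R : G →* Matrix (Σ i, Fin (n i)) (Σ i, Fin (n i)) ℂ)
    (hR2 : ∀ x y z w, ∑ g, R g x y * R g⁻¹ z w =
          if x = w ∧ y = z ∧ x.1 = y.1 then (Fintype.card G : ℂ) / n x.1 else 0)
    (B : Set (Quotient α.cycleSetoid)) (i : D → Σ j, Fin (n j)) (e : Quotient α.cycleSetoid) :
    ∑ g ∈ (if e ∈ B then Finset.univ else {1} : Finset G),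
      R g (i e.out) (i (σ e.out)) * R g⁻¹ (i (α e.out)) (i (σ (α e.out))) =
    if ∀ d, Quotient.mk α.cycleSetoid d = e → 
        i (tauB σ α hinv B d) = i d ∧ (i (σ d)).1 = (i d).1 then
      (if e ∈ B then (Fintype.card G : ℂ) / n (i e.out).1 else 1) else 0 := by
  have hall : (∀ d, Quotient.mk α.cycleSetoid d = e → 
        i (tauB σ α hinv B d) = i d ∧ (i (σ d)).1 = (i d).1) ↔
      ((i (tauB σ α hinv B e.out) = i e.out ∧ (i (σ e.out)).1 = (i e.out).1) ∧
       (i (tauB σ α hinv B (α e.out)) = i (α e.out) ∧ (i (σ (α e.out))).1 = (i (α e.out)).1)) := by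
    constructor
    · intro h
      exact ⟨h _ (Quotient.out_eq _), h _ (mk_alpha_out α e)⟩
    · rintro ⟨h1, h2⟩ d rfl
      rcases edge_cases α hinv d with h | h
      · rw [← h] at h1; exact h1
      · rw [← h] at h2; exact h2
  by_cases he : e ∈ B
  · have t1 : tauB σ α hinv B e.out = σ (α e.out) := by
      rw [tauB, Equiv.Perm.mul_apply, alphaB_mem α hinv B (by rwa [Quotient.out_eq])]
    have t2 : tauB σ α hinv B (α e.out) = σ e.out := by
      rw [tauB, Equiv.Perm.mul_apply, alphaB_mem α hinv B (by rwa [mk_alpha_out]), hinv]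
    rw [if_pos he, hR2, if_pos he]
    refine if_congr ?_ rfl rfl
    rw [hall, t1, t2]
    constructor
    · rintro ⟨h1, h2, h3⟩
      rw [← h1, h2] at *
      exact ⟨⟨rfl, h3.symm⟩, rfl, h3⟩
    · rintro ⟨⟨h1, h2⟩, h3, h4⟩
      exact ⟨h1.symm, h3, h2.symm⟩
  · have t1 : tauB σ α hinv B e.out = σ e.out := by
      rw [tauB, Equiv.Perm.mul_apply, alphaB_not_mem α hinv B (by rwa [Quotient.out_eq])]
    have t2 : tauB σ α hinv B (α e.out) = σ (α e.out) := by
      rw [tauB, Equiv.Perm.mul_apply, alphaB_not_mem α hinv B (by rwa [mk_alpha_out])]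
    rw [if_neg he, if_neg he, Finset.sum_singleton, inv_one, map_one, Matrix.one_apply,
      Matrix.one_apply]
    have hm : ∀ (p q : Prop) [Decidable p] [Decidable q],
        (if p then (1:ℂ) else 0) * (if q then 1 else 0) = if p ∧ q then 1 else 0 := by
      intro p q _ _
      by_cases hp : p <;> by_cases hq : q <;> simp [hp, hq]
    rw [hm]
    refine if_congr ?_ rfl rfl
    rw [hall, t1, t2]
    constructor
    · rintro ⟨h1, h2⟩
      rw [← h1, ← h2]
      simp
    · rintro ⟨⟨h1, h2⟩, h3, h4⟩
      exact ⟨h1.symm, h3.symm⟩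

open scoped Classical in
lemma count_B [Fintype D] {G : Type} [Group G] [Fintype G]
    {ι : Type} [Fintype ι] (n : ι → ℕ)
    (R : G →* Matrix (Σ i, Fin (n i)) (Σ i, Fin (n i)) ℂ)
    (hR1 : ∀ g, ∑ x, (n x.1 : ℂ) * R g x x = if g = 1 then (Fintype.card G : ℂ) else 0)
    (hR2 : ∀ x y z w, ∑ g, R g x y * R g⁻¹ z w =
          if x = w ∧ y = z ∧ x.1 = y.1 then (Fintype.card G : ℂ) / n x.1 else 0)
    (B : Set (Quotient α.cycleSetoid)) :
    (∑ κ : D → G with IsGFlow σ α κ ∧ ∀ d, Quotient.mk α.cycleSetoid d ∉ B → κ d = 1, (1 : ℂ)) =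
     ((Fintype.card G : ℂ) ^ Fintype.card (Quotient σ.cycleSetoid))⁻¹ *
      ∑ i : D → Σ j, Fin (n j) with Good σ α hinv B i,
        (∏ v : Quotient σ.cycleSetoid, (n (i v.out).1 : ℂ)) *
        ∏ e : Quotient α.cycleSetoid,
          (if e ∈ B then (Fintype.card G : ℂ) / n (i e.out).1 else 1) := by
  have hG : (Fintype.card G : ℂ) ≠ 0 := by simp
  have step1 : (∑ κ : D → G with IsGFlow σ α κ ∧ ∀ d, Quotient.mk α.cycleSetoid d ∉ B → κ d = 1,
      (1 : ℂ)) =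
      ∑ κ : D → G with IsGLabelling α κ ∧ ∀ d, Quotient.mk α.cycleSetoid d ∉ B → κ d = 1,
        ∏ v : Quotient σ.cycleSetoid, (if aroundProd σ κ v.out = 1 then 1 else 0) := by
    simp only [Finset.prod_ite_zero, Finset.prod_const_one]
    rw [← Finset.sum_filter, Finset.filter_filter]
    refine Finset.sum_congr ?_ fun _ _ => rfl
    ext κ
    rw [Finset.mem_filter, Finset.mem_filter]
    have : (∀ d, aroundProd σ κ d = 1) ↔ ∀ v : Quotient σ.cycleSetoid, aroundProd σ κ v.out = 1 := by
      constructor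
      · intro h v; exact h _
      · intro h d
        exact aroundProd_eq_one_of_sameCycle σ κ
          (Quotient.exact (s := σ.cycleSetoid) (Quotient.out_eq _)) (h (Quotient.mk _ d))
    constructor
    · rintro ⟨h0, ⟨h1, h2⟩, h3⟩
      exact ⟨h0, ⟨h1, h3⟩, fun v _ => this.1 h2 v⟩
    · rintro ⟨h0, ⟨h1, h3⟩, h2⟩
      exact ⟨h0, ⟨h1, this.2 fun v => h2 v (Finset.mem_univ _)⟩, h3⟩
  have step2 : ∀ κ : D → G, ∏ v : Quotient σ.cycleSetoid,
      (if aroundProd σ κ v.out = 1 then (1:ℂ) else 0) =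
      ((Fintype.card G : ℂ) ^ Fintype.card (Quotient σ.cycleSetoid))⁻¹ *
      ∑ i : D → Σ j, Fin (n j), (∏ v : Quotient σ.cycleSetoid, (n (i v.out).1 : ℂ)) *
        ∏ d, R (κ d) (i d) (i (σ d)) := by
    intro κ
    rw [← prod_trace_expand σ R κ (fun x => (n x.1 : ℂ))]
    simp_rw [hR1]
    rw [eq_inv_mul_iff_mul_eq₀ (pow_ne_zero _ hG), ← Finset.card_univ (α := Quotient σ.cycleSetoid), ← Finset.prod_const,
      ← Finset.prod_mul_distrib]
    refine Finset.prod_congr rfl fun v _ => ?_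
    split_ifs <;> simp
  rw [step1]
  simp_rw [step2]
  rw [← Finset.mul_sum, Finset.sum_comm, Finset.sum_filter]
  congr 1
  refine Finset.sum_congr rfl fun i _ => ?_
  rw [← Finset.mul_sum, sum_labellings α hinv hfpf B (fun d g => R g (i d) (i (σ d)))]
  simp_rw [edge_factor σ α hinv hfpf n R hR2 B i]
  by_cases hg : Good σ α hinv B i
  · rw [if_pos hg]
    congr 1
    refine Finset.prod_congr rfl fun e _ => ?_
    rw [if_pos fun d _ => hg d]
  · rw [if_neg hg]
    have : ∃ d, ¬ (i (tauB σ α hinv B d) = i d ∧ (i (σ d)).1 = (i d).1) := by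
      by_contra hh
      push Not at hh
      exact hg hh
    obtain ⟨d, hd⟩ := this
    rw [Finset.prod_eq_zero (Finset.mem_univ (Quotient.mk α.cycleSetoid d)), mul_zero]
    rw [if_neg fun h => hd (h d rfl)]
end
end GFlow
namespace GFlow
section
variable {D : Type} (σ α : Equiv.Perm D) (hinv : ∀ d, α (α d) = d)

lemma eq_of_sameCycle [Finite D] {X : Type*} (τ : Equiv.Perm D) (f : D → X)
    (h : ∀ d, f (τ d) = f d) {a b : D} (hab : τ.SameCycle a b) : f a = f b := by
  obtain ⟨k, rfl⟩ := hab.exists_nat_pow_eq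
  clear hab
  induction k with
  | zero => simp
  | succ k ih => rw [pow_succ', Equiv.Perm.mul_apply, h, ih]

/-- the component of a vertex -/
def comp (B : Set (Quotient α.cycleSetoid)) (v : Quotient σ.cycleSetoid) :
    Quotient (Relation.EqvGen.setoid (spanningRel σ α B)) := Quotient.mk _ v

/-- the component of a dart -/
def cd (B : Set (Quotient α.cycleSetoid)) (d : D) :
    Quotient (Relation.EqvGen.setoid (spanningRel σ α B)) :=
  comp σ α B (Quotient.mk σ.cycleSetoid d)

lemma cd_sigma (B : Set (Quotient α.cycleSetoid)) (d : D) : cd σ α B (σ d) = cd σ α B d := by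
  rw [cd, cd, mk_alpha]

lemma cd_alpha (B : Set (Quotient α.cycleSetoid)) {d : D}
    (h : Quotient.mk α.cycleSetoid d ∈ B) : cd σ α B (α d) = cd σ α B d :=
  (Quotient.sound (s := Relation.EqvGen.setoid (spanningRel σ α B))
    (Relation.EqvGen.rel _ _ ⟨d, h, rfl, rfl⟩)).symm

lemma cd_tau (B : Set (Quotient α.cycleSetoid)) (d : D) :
    cd σ α B (tauB σ α hinv B d) = cd σ α B d := by
  rw [tauB, Equiv.Perm.mul_apply, cd_sigma]
  by_cases h : Quotient.mk α.cycleSetoid d ∈ B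
  · rw [alphaB_mem α hinv B h, cd_alpha σ α B h]
  · rw [alphaB_not_mem α hinv B h]

/-- the component of a face -/
noncomputable def co [Finite D] (B : Set (Quotient α.cycleSetoid))
    (o : Quotient (tauB σ α hinv B).cycleSetoid) :
    Quotient (Relation.EqvGen.setoid (spanningRel σ α B)) :=
  Quotient.lift (s := (tauB σ α hinv B).cycleSetoid) (cd σ α B)
    (fun _ _ h => eq_of_sameCycle _ _ (cd_tau σ α hinv B) h) o

lemma co_mk [Finite D] (B : Set (Quotient α.cycleSetoid)) (d : D) :
    co σ α hinv B (Quotient.mk _ d) = cd σ α B d := rfl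

lemma cd_out (B : Set (Quotient α.cycleSetoid))
    (C : Quotient (Relation.EqvGen.setoid (spanningRel σ α B))) :
    cd σ α B C.out.out = C := by
  rw [cd, Quotient.out_eq]; exact Quotient.out_eq C

variable {ι : Type} {n : ι → ℕ}

lemma good_iff [Finite D] (B : Set (Quotient α.cycleSetoid)) (i : D → Σ j, Fin (n j))
    (l : Quotient (Relation.EqvGen.setoid (spanningRel σ α B)) → ι) :
    (Good σ α hinv B i ∧ (fun C : Quotient (Relation.EqvGen.setoid (spanningRel σ α B)) =>
      (i C.out.out).1) = l) ↔
    (∀ d, i (tauB σ α hinv B d) = i d) ∧ ∀ d, (i d).1 = l (cd σ α B d) := by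
  constructor
  · rintro ⟨hg, rfl⟩
    refine ⟨fun d => (hg d).1, ?_⟩
    have h1 : ∀ v w : Quotient σ.cycleSetoid, Relation.EqvGen (spanningRel σ α B) v w →
        (i v.out).1 = (i w.out).1 := by
      intro v w h
      induction h with
      | rel v w h =>
        obtain ⟨d, hd, rfl, rfl⟩ := h
        have e1 : (i (Quotient.mk σ.cycleSetoid d).out).1 = (i d).1 :=
          eq_of_sameCycle σ (fun d => (i d).1) (fun d => (hg d).2)
            (Quotient.exact (s := σ.cycleSetoid) (Quotient.out_eq _))
        have e2 : (i (Quotient.mk σ.cycleSetoid (α d)).out).1 = (i (α d)).1 :=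
          eq_of_sameCycle σ (fun d => (i d).1) (fun d => (hg d).2)
            (Quotient.exact (s := σ.cycleSetoid) (Quotient.out_eq _))
        rw [e1, e2, ← (hg (α d)).2, ← (hg d).1, tauB, Equiv.Perm.mul_apply,
          alphaB_mem α hinv B hd]
      | refl v => rfl
      | symm v w _ ih => exact ih.symm
      | trans u v w _ _ ih1 ih2 => exact ih1.trans ih2
    intro d
    have e1 : (i (Quotient.mk σ.cycleSetoid d).out).1 = (i d).1 :=
          eq_of_sameCycle σ (fun d => (i d).1) (fun d => (hg d).2)
            (Quotient.exact (s := σ.cycleSetoid) (Quotient.out_eq _))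
    rw [← e1]
    apply h1
    apply Quotient.exact (s := Relation.EqvGen.setoid (spanningRel σ α B))
    rw [Quotient.out_eq]; rfl
  · rintro ⟨h1, h2⟩
    refine ⟨fun d => ⟨h1 d, ?_⟩, ?_⟩
    · rw [h2, h2, cd_sigma]
    · funext C
      rw [h2, cd_out]

lemma card_fib [Fintype ι] [DecidableEq ι] (j : ι) :
    (Finset.univ.filter fun x : Σ j, Fin (n j) => x.1 = j).card = n j := by
  classical
  have : (Finset.univ.filter fun x : Σ j, Fin (n j) => x.1 = j) =
      Finset.univ.map (Function.Embedding.sigmaMk (β := fun j => Fin (n j)) j) := by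
    ext ⟨a, b⟩
    simp only [Finset.mem_filter, Finset.mem_univ, true_and, Finset.mem_map,
      Function.Embedding.sigmaMk_apply]
    constructor
    · rintro rfl; exact ⟨b, rfl⟩
    · rintro ⟨c, hc⟩; cases hc; rfl
  rw [this]; simp

open scoped Classical in
lemma card_inv [Fintype D] [Fintype ι] (B : Set (Quotient α.cycleSetoid))
    (l : Quotient (Relation.EqvGen.setoid (spanningRel σ α B)) → ι) :
    (Finset.univ.filter fun i : D → Σ j, Fin (n j) =>
      (∀ d, i (tauB σ α hinv B d) = i d) ∧ ∀ d, (i d).1 = l (cd σ α B d)).card =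
    ∏ o : Quotient (tauB σ α hinv B).cycleSetoid, n (l (co σ α hinv B o)) := by
  simp_rw [← card_fib (n := n)]
  rw [← Fintype.card_piFinset]
  refine Finset.card_bij' (fun i _ => fun o => i o.out) (fun j _ => fun d => j (Quotient.mk _ d))
    ?_ ?_ ?_ ?_
  · intro i hi
    rw [Finset.mem_filter] at hi
    rw [Fintype.mem_piFinset]
    intro o
    rw [Finset.mem_filter]
    refine ⟨Finset.mem_univ _, ?_⟩
    rw [hi.2.2, ← co_mk σ α hinv, Quotient.out_eq]
  · intro j hj
    rw [Fintype.mem_piFinset] at hj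
    rw [Finset.mem_filter]
    refine ⟨Finset.mem_univ _, fun d => ?_, fun d => ?_⟩
    · exact congrArg j (mk_alpha _ d)
    · have := hj (Quotient.mk _ d)
      rw [Finset.mem_filter] at this
      exact this.2
  · intro i hi
    rw [Finset.mem_filter] at hi
    funext d
    exact eq_of_sameCycle _ i hi.2.1 (Quotient.exact (s := (tauB σ α hinv B).cycleSetoid)
      (Quotient.out_eq _))
  · intro j hj
    funext o
    simp only [Quotient.out_eq]

open scoped Classical in
/-- local Euler characteristic -/
noncomputable def eul [Fintype D] (B : Set (Quotient α.cycleSetoid))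
    (C : Quotient (Relation.EqvGen.setoid (spanningRel σ α B))) : ℤ :=
  ((Finset.univ.filter fun v : Quotient σ.cycleSetoid => comp σ α B v = C).card : ℤ)
  - ((Finset.univ.filter fun e : Quotient α.cycleSetoid =>
      e ∈ B ∧ cd σ α B e.out = C).card : ℤ)
  + ((Finset.univ.filter fun o : Quotient (tauB σ α hinv B).cycleSetoid =>
      co σ α hinv B o = C).card : ℤ)

open scoped Classical in
lemma sum_good [Fintype D] [Fintype ι] (hn : ∀ j, n j ≠ 0) (B : Set (Quotient α.cycleSetoid))
    (q : ℂ) :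
    ∑ i : D → Σ j, Fin (n j) with Good σ α hinv B i,
        (∏ v : Quotient σ.cycleSetoid, (n (i v.out).1 : ℂ)) *
        ∏ e : Quotient α.cycleSetoid, (if e ∈ B then q / n (i e.out).1 else 1) =
    q ^ (Finset.univ.filter fun e : Quotient α.cycleSetoid => e ∈ B).card *
      ∏ C : Quotient (Relation.EqvGen.setoid (spanningRel σ α B)),
        ∑ j, (n j : ℂ) ^ eul σ α hinv B C := by
  rw [Finset.prod_univ_sum, Fintype.piFinset_univ, Finset.mul_sum]
  rw [← Finset.sum_fiberwise _ (fun (i : D → Σ j, Fin (n j))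
    (C : Quotient (Relation.EqvGen.setoid (spanningRel σ α B))) => (i C.out.out).1)]
  refine Finset.sum_congr rfl fun l _ => ?_
  rw [Finset.filter_filter]
  rw [Finset.filter_congr (fun i _ => good_iff σ α hinv B i l)]
  rw [Finset.sum_congr rfl (g := fun _ => (∏ v : Quotient σ.cycleSetoid,
        (n (l (comp σ α B v)) : ℂ)) *
        ∏ e : Quotient α.cycleSetoid, (if e ∈ B then q / n (l (cd σ α B e.out)) else 1))]
  · rw [Finset.sum_const, card_inv, nsmul_eq_mul]
    push_cast
    rw [← Finset.prod_filter, Finset.prod_div_distrib, Finset.prod_const,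
      ← Finset.prod_fiberwise' (g := co σ α hinv B) (f := fun C => (n (l C) : ℂ)),
      ← Finset.prod_fiberwise' (g := comp σ α B) (f := fun C => (n (l C) : ℂ)),
      ← Finset.prod_fiberwise' (g := fun e => cd σ α B (Quotient.out e))
        (f := fun C => (n (l C) : ℂ))]
    simp_rw [Finset.prod_const, Finset.filter_filter]
    have : ∀ a b c d : ℂ, a * (b * (c / d)) = c * (b * d⁻¹ * a) := by intros; ring
    rw [this]
    congr 1
    rw [← Finset.prod_inv_distrib, ← Finset.prod_mul_distrib, ← Finset.prod_mul_distrib]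
    refine Finset.prod_congr rfl fun C _ => ?_
    have h0 : (n (l C) : ℂ) ≠ 0 := by exact_mod_cast hn _
    rw [eul, zpow_add₀ h0, zpow_sub₀ h0, zpow_natCast, zpow_natCast, zpow_natCast, div_eq_mul_inv]
  · intro i hi
    rw [Finset.mem_filter] at hi
    congr 1
    · refine Finset.prod_congr rfl fun v _ => ?_
      rw [hi.2.2, cd, Quotient.out_eq]
    · refine Finset.prod_congr rfl fun e _ => ?_
      rw [hi.2.2]
end
end GFlow
namespace GFlow
section
variable {D : Type} (σ α : Equiv.Perm D) (hinv : ∀ d, α (α d) = d)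

lemma orbit_count [Fintype D] (τ : Equiv.Perm D) (T : Set D) (f : D → D)
    (P : Quotient τ.cycleSetoid → Prop)
    (hT : ∀ a ∈ T, P (Quotient.mk _ a))
    (hmeet : ∀ o, P o → ∃ a ∈ T, Quotient.mk _ a = o)
    (hf : ∀ a ∈ T, ∃ k, 0 < k ∧ f a = (τ ^ k) a ∧ (τ ^ k) a ∈ T ∧
      ∀ j, 0 < j → j < k → (τ ^ j) a ∉ T) :
    orbitCountOn f T = Nat.card {o // P o} := by
  have hrel : ∀ a b : T, f a = (b : D) →
      Quotient.mk τ.cycleSetoid (a : D) = Quotient.mk τ.cycleSetoid (b : D) := by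
    intro a b h
    obtain ⟨k, _, hk, _⟩ := hf a a.2
    rw [← h, hk, mk_pow]
  have hrel2 : ∀ a b : T, Relation.EqvGen (fun a b : T => f a = (b : D)) a b →
      Quotient.mk τ.cycleSetoid (a : D) = Quotient.mk τ.cycleSetoid (b : D) := by
    intro a b h
    induction h with
    | rel a b h => exact hrel a b h
    | refl a => rfl
    | symm a b _ ih => exact ih.symm
    | trans a b c _ _ h1 h2 => exact h1.trans h2
  have key : ∀ m : ℕ, ∀ a b : T, (τ ^ m) (a : D) = b →
      Relation.EqvGen (fun a b : T => f a = (b : D)) a b := by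
    intro m
    induction m using Nat.strong_induction_on with
    | _ m ih =>
      intro a b h
      rcases Nat.eq_zero_or_pos m with rfl | hm
      · have : a = b := Subtype.ext (by simpa using h)
        rw [this]
        exact Relation.EqvGen.refl _
      · obtain ⟨k, hk0, hk1, hk2, hk3⟩ := hf a a.2
        have hkm : k ≤ m := by
          by_contra hlt
          exact hk3 m hm (not_le.1 hlt) (h ▸ b.2)
        refine Relation.EqvGen.trans _ ⟨(τ ^ k) (a : D), hk2⟩ _ (Relation.EqvGen.rel _ _ hk1) ?_
        apply ih (m - k) (by omega)
        rw [← Equiv.Perm.mul_apply, ← pow_add, Nat.sub_add_cancel hkm, h]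
  refine Nat.card_congr (Equiv.ofBijective
    (Quotient.lift (s := Relation.EqvGen.setoid fun a b : T => f a = (b : D))
      (fun a : T => (⟨Quotient.mk _ (a : D), hT a a.2⟩ : {o // P o}))
      (fun a b h => Subtype.ext (hrel2 a b h))) ⟨?_, ?_⟩)
  · rintro ⟨a⟩ ⟨b⟩ h
    have h1 : Quotient.mk τ.cycleSetoid (a : D) = Quotient.mk τ.cycleSetoid (b : D) :=
      congrArg Subtype.val h
    have h2 : τ.SameCycle (a : D) b := Quotient.exact (s := τ.cycleSetoid) h1
    obtain ⟨m, hm⟩ := h2.exists_nat_pow_eq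
    exact Quotient.sound (s := Relation.EqvGen.setoid fun a b : T => f a = (b : D)) (key m a b hm)
  · rintro ⟨o, ho⟩
    obtain ⟨a, ha, rfl⟩ := hmeet o ho
    exact ⟨Quotient.mk _ ⟨a, ha⟩, rfl⟩

lemma firstReturn_spec [Finite D] (S : Set D) {d : D} (hd : d ∈ S) :
    ∃ k, 0 < k ∧ firstReturn σ S d = (σ ^ k) d ∧ (σ ^ k) d ∈ S ∧
      ∀ j, 0 < j → j < k → (σ ^ j) d ∉ S := by
  classical
  have h : ∃ k, 0 < k ∧ (σ ^ k) d ∈ S := by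
    refine ⟨orderOf σ, orderOf_pos σ, ?_⟩
    rwa [pow_orderOf_eq_one]
  refine ⟨Nat.find h, (Nat.find_spec h).1, ?_, (Nat.find_spec h).2, ?_⟩
  · rw [firstReturn, dif_pos h]
  · intro j hj hlt hS
    exact Nat.find_min h hlt ⟨hj, hS⟩

lemma cd_sigma_pow (B : Set (Quotient α.cycleSetoid)) (j : ℕ) (d : D) :
    cd σ α B ((σ ^ j) d) = cd σ α B d := by
  induction j with
  | zero => simp
  | succ j ih => rw [pow_succ', Equiv.Perm.mul_apply, cd_sigma, ih]

lemma tau_pow (B : Set (Quotient α.cycleSetoid)) (d : D) (k : ℕ)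
    (h : ∀ j, j < k → Quotient.mk α.cycleSetoid ((σ ^ j) d) ∉ B) :
    ((tauB σ α hinv B) ^ k) d = (σ ^ k) d := by
  induction k with
  | zero => simp
  | succ k ih =>
    rw [pow_succ', Equiv.Perm.mul_apply, ih fun j hj => h j (by omega), tauB,
      Equiv.Perm.mul_apply, alphaB_not_mem α hinv B (h k (by omega)), pow_succ',
      Equiv.Perm.mul_apply]

lemma isolated (B : Set (Quotient α.cycleSetoid)) (v : Quotient σ.cycleSetoid)
    (hv : ∀ a, Quotient.mk α.cycleSetoid a ∈ B → Quotient.mk σ.cycleSetoid a ≠ v)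
    (w : Quotient σ.cycleSetoid) (hw : comp σ α B w = comp σ α B v) : w = v := by
  have h : ∀ u w : Quotient σ.cycleSetoid, Relation.EqvGen (spanningRel σ α B) u w →
      (u = v ↔ w = v) := by
    intro u w h
    induction h with
    | rel u w h =>
      obtain ⟨d, hd, rfl, rfl⟩ := h
      have h1 := hv d hd
      have h2 := hv (α d) (by rwa [mk_alpha])
      simp [h1, h2]
    | refl u => rfl
    | symm _ _ _ ih => exact ih.symm
    | trans _ _ _ _ _ h1 h2 => exact h1.trans h2
  exact (h w v (Quotient.exact (s := Relation.EqvGen.setoid (spanningRel σ α B)) hw)).2 rfl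

lemma meet_sigma (B : Set (Quotient α.cycleSetoid))
    (C : Quotient (Relation.EqvGen.setoid (spanningRel σ α B)))
    (hC : (componentDarts σ α B C).Nonempty) (v : Quotient σ.cycleSetoid)
    (hv : comp σ α B v = C) :
    ∃ a ∈ componentDarts σ α B C, Quotient.mk σ.cycleSetoid a = v := by
  by_contra hcon
  push Not at hcon
  obtain ⟨t, ht⟩ := hC
  refine hcon t ht (isolated σ α B v ?_ _ ?_)
  · intro a ha hav
    refine hcon a ⟨ha, ?_⟩ hav
    rw [hav]; exact hv
  · rw [hv]; exact ht.2

include hinv in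
lemma cd_edge_out (B : Set (Quotient α.cycleSetoid)) {a : D}
    (ha : Quotient.mk α.cycleSetoid a ∈ B) :
    cd σ α B (Quotient.mk α.cycleSetoid a).out = cd σ α B a := by
  rcases edge_cases α hinv a with h | h
  · rw [← h]
  · conv_rhs => rw [h]
    rw [cd_alpha]
    rwa [Quotient.out_eq]

open scoped Classical in
lemma euler_eq [Fintype D] (B : Set (Quotient α.cycleSetoid))
    (C : Quotient (Relation.EqvGen.setoid (spanningRel σ α B))) :
    componentEuler σ α B C = eul σ α hinv B C := by
  have hcdT : ∀ a, a ∈ componentDarts σ α B C ↔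
    (Quotient.mk α.cycleSetoid a ∈ B ∧ cd σ α B a = C) := fun a => Iff.rfl
  by_cases hC : (componentDarts σ α B C).Nonempty
  · rw [componentEuler, if_pos hC, eul]
    congr 1
    · congr 1
      · rw [orbit_count σ (componentDarts σ α B C) _ (fun v => comp σ α B v = C)
          (fun a ha => ha.2) (meet_sigma σ α B C hC)]
        · rw [Nat.card_eq_fintype_card, Fintype.card_subtype]
        · intro a ha
          obtain ⟨k, h1, h2, h3, h4⟩ := firstReturn_spec σ (dartsIn α B) (d := a) ha.1
          refine ⟨k, h1, h2, ⟨h3, ?_⟩, fun j hj hjk hh => h4 j hj hjk hh.1⟩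
          exact (cd_sigma_pow σ α B k a).trans ha.2
      · rw [orbit_count α (componentDarts σ α B C) _
          (fun e => e ∈ B ∧ cd σ α B e.out = C)]
        · rw [Nat.card_eq_fintype_card, Fintype.card_subtype]
        · intro a ha
          exact ⟨ha.1, (cd_edge_out σ α hinv B ha.1).trans ha.2⟩
        · intro e he
          exact ⟨e.out, ⟨by rw [Quotient.out_eq]; exact he.1, he.2⟩, Quotient.out_eq e⟩
        · intro a ha
          refine ⟨1, one_pos, by simp, ?_, fun j _ _ => by omega⟩
          rw [pow_one, hcdT, mk_alpha]
          exact ⟨ha.1, (cd_alpha σ α B ha.1).trans ha.2⟩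
    · rw [orbit_count (tauB σ α hinv B) (componentDarts σ α B C) _
          (fun o => co σ α hinv B o = C)]
      · rw [Nat.card_eq_fintype_card, Fintype.card_subtype]
      · intro a ha
        exact ha.2
      · intro o ho
        induction o using Quotient.inductionOn with
        | h d =>
          obtain ⟨a, ha, had⟩ := meet_sigma σ α B C hC (Quotient.mk _ d) ho
          have hs : σ.SameCycle d a := (Quotient.exact (s := σ.cycleSetoid) had).symm
          obtain ⟨m, hm⟩ := hs.exists_nat_pow_eq
          have hex : ∃ j, Quotient.mk α.cycleSetoid ((σ ^ j) d) ∈ B := ⟨m, by rw [hm]; exact ha.1⟩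
          have ht := tau_pow σ α hinv B d (Nat.find hex) (fun j hj => Nat.find_min hex hj)
          refine ⟨(σ ^ Nat.find hex) d, ⟨Nat.find_spec hex, ?_⟩, ?_⟩
          · exact (cd_sigma_pow σ α B _ d).trans ho
          · rw [← ht, mk_pow]
      · intro a ha
        have haα : α a ∈ dartsIn α B := by
          show Quotient.mk _ _ ∈ B
          rw [mk_alpha]; exact ha.1
        obtain ⟨k, h1, h2, h3, h4⟩ := firstReturn_spec σ (dartsIn α B) haα
        have hp : ∀ j, 0 < j → j ≤ k → ((tauB σ α hinv B) ^ j) a = (σ ^ j) (α a) := by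
          intro j hj hjk
          induction j with
          | zero => omega
          | succ j ih =>
            rcases Nat.eq_zero_or_pos j with rfl | hj0
            · simp [tauB, alphaB_mem α hinv B ha.1]
            · rw [pow_succ', Equiv.Perm.mul_apply, ih hj0 (by omega), tauB,
                Equiv.Perm.mul_apply, alphaB_not_mem α hinv B (h4 j hj0 (by omega)), pow_succ',
                Equiv.Perm.mul_apply]
        refine ⟨k, h1, ?_, ?_, ?_⟩
        · rw [hp k h1 le_rfl, ← h2]
        · rw [hp k h1 le_rfl]
          refine ⟨h3, ?_⟩
          exact ((cd_sigma_pow σ α B k _).trans (cd_alpha σ α B ha.1)).trans ha.2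
        · intro j hj hjk hh
          rw [hp j hj hjk.le] at hh
          exact h4 j hj hjk hh.1
  · rw [componentEuler, if_neg hC, eul]
    have hemp : ∀ a, cd σ α B a = C → Quotient.mk α.cycleSetoid a ∉ B := by
      intro a h1 h2
      exact hC ⟨a, h2, h1⟩
    obtain ⟨d, hd⟩ : ∃ d, cd σ α B d = C := ⟨_, cd_out σ α B C⟩
    have hiso : ∀ w, comp σ α B w = C → w = Quotient.mk σ.cycleSetoid d := by
      intro w hw
      refine isolated σ α B _ ?_ w (hw.trans hd.symm)
      intro a ha hav
      refine hemp a ?_ ha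
      rw [← hd, cd, hav]; rfl
    have c1 : (Finset.univ.filter fun v : Quotient σ.cycleSetoid => comp σ α B v = C) =
        {Quotient.mk σ.cycleSetoid d} := by
      ext w
      rw [Finset.mem_filter, Finset.mem_singleton]
      refine ⟨fun h => hiso w h.2, ?_⟩
      rintro rfl
      exact ⟨Finset.mem_univ _, hd⟩
    have c2 : (Finset.univ.filter fun e : Quotient α.cycleSetoid =>
        e ∈ B ∧ cd σ α B e.out = C) = ∅ := by
      rw [Finset.filter_eq_empty_iff]
      rintro e _ ⟨h1, h2⟩
      refine hemp _ h2 ?_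
      rwa [Quotient.out_eq]
    have c3 : (Finset.univ.filter fun o : Quotient (tauB σ α hinv B).cycleSetoid =>
        co σ α hinv B o = C) = {Quotient.mk _ d} := by
      ext o
      rw [Finset.mem_filter, Finset.mem_singleton]
      constructor
      · rintro ⟨_, ho⟩
        induction o using Quotient.inductionOn with
        | h d' =>
          have h1 := hiso (Quotient.mk _ d') ho
          have hs : σ.SameCycle d d' := (Quotient.exact (s := σ.cycleSetoid) h1).symm
          obtain ⟨m, hm⟩ := hs.exists_nat_pow_eq
          rw [← hm, ← tau_pow σ α hinv B d m, mk_pow]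
          intro j _
          exact hemp _ ((cd_sigma_pow σ α B j d).trans hd)
      · rintro rfl
        exact ⟨Finset.mem_univ _, hd⟩
    rw [c1, c2, c3]
    simp
end
end GFlow
namespace GFlow
section
variable {D : Type} (σ α : Equiv.Perm D) (hinv : ∀ d, α (α d) = d) (hfpf : ∀ d, α d ≠ d)

include hinv in
lemma lab_iff {G : Type} [Group G] (κ : D → G) (hκ : IsGLabelling α κ)
    (B : Set (Quotient α.cycleSetoid)) :
    (∀ e : Quotient α.cycleSetoid, e ∉ B → κ e.out = 1) ↔
      ∀ d, Quotient.mk α.cycleSetoid d ∉ B → κ d = 1 := by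
  constructor
  · intro h d hd
    rcases edge_cases α hinv d with h1 | h1
    · rw [h1]; exact h _ hd
    · rw [h1, hκ, h _ hd, inv_one]
  · intro h e he
    exact h _ (by rwa [Quotient.out_eq])

include hinv in
open scoped Classical in
lemma incl_excl [Fintype D] {G : Type} [Group G] [Fintype G] :
    (Nat.card {κ : D → G // IsGFlow σ α κ ∧ ∀ d, κ d ≠ 1} : ℂ) =
    ∑ t : Finset (Quotient α.cycleSetoid), (-1 : ℂ) ^ (Finset.univ \ t).card *
      ∑ κ : D → G with IsGFlow σ α κ ∧
        ∀ d, Quotient.mk α.cycleSetoid d ∉ (t : Set (Quotient α.cycleSetoid)) → κ d = 1,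
        (1 : ℂ) := by
  have h1 : (Nat.card {κ : D → G // IsGFlow σ α κ ∧ ∀ d, κ d ≠ 1} : ℂ) =
      ∑ κ : D → G with IsGFlow σ α κ,
        ∏ e : Quotient α.cycleSetoid, (1 + (if κ e.out = 1 then (-1 : ℂ) else 0)) := by
    rw [Nat.card_eq_fintype_card, Fintype.card_subtype, ← Finset.filter_filter,
      Finset.card_filter, Nat.cast_sum]
    refine Finset.sum_congr rfl fun κ hκ => ?_
    have hκ : IsGFlow σ α κ := (Finset.mem_filter.1 hκ).2
    by_cases hn : ∀ d, κ d ≠ 1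
    · rw [if_pos hn, Finset.prod_eq_one]
      · simp
      · intro e _
        rw [if_neg (hn _), add_zero]
    · rw [if_neg hn]
      push Not at hn
      obtain ⟨d, hd⟩ := hn
      rw [Finset.prod_eq_zero (Finset.mem_univ (Quotient.mk α.cycleSetoid d))]
      · simp
      · rw [if_pos]
        · simp
        · rcases edge_cases α hinv d with h | h
          · rw [← h]; exact hd
          · rw [h, hκ.1, inv_eq_one] at hd
            exact hd
  rw [h1]
  simp_rw [Finset.prod_add, Finset.prod_const_one, one_mul]
  rw [Finset.sum_comm, Finset.powerset_univ]
  refine Finset.sum_congr rfl fun t _ => ?_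
  rw [← Finset.filter_filter, Finset.sum_filter (s := Finset.univ.filter _), Finset.mul_sum]
  refine Finset.sum_congr rfl fun κ hκ => ?_
  have hκ : IsGFlow σ α κ := (Finset.mem_filter.1 hκ).2
  by_cases hB : ∀ d, Quotient.mk α.cycleSetoid d ∉ (t : Set (Quotient α.cycleSetoid)) → κ d = 1
  · rw [if_pos hB, mul_one, ← Finset.prod_const]
    refine Finset.prod_congr rfl fun e he => ?_
    rw [if_pos]
    apply (lab_iff α hinv κ hκ.1 _).2 hB
    simpa using he
  · rw [if_neg hB, mul_zero]
    rw [← lab_iff α hinv κ hκ.1] at hB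
    push Not at hB
    obtain ⟨e, he, hne⟩ := hB
    refine Finset.prod_eq_zero (i := e) ?_ (if_neg hne)
    simpa using he

end
end GFlow

open CategoryTheory in
/-- The number of nowhere-identity `G`-flows on a connected combinatorial map
`M = (D, σ, α)`, by inclusion-exclusion over subsets `B` of the edge set. -/
theorem count_nowhere_identity_G_flows
    {D : Type} [Fintype D] [Nonempty D] (σ α : Equiv.Perm D)
    (hinv : ∀ d, α (α d) = d) (hfpf : ∀ d, α d ≠ d)
    (hconn : MapConnected σ α)
    {G : Type} [Group G] [Fintype G]
    (ι : Type) [Fintype ι] (ρ : ι → FDRep ℂ G)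
    (hsimple : ∀ i, Simple (ρ i))
    (hpairwise : ∀ i j, Nonempty (ρ i ≅ ρ j) → i = j)
    (hcomplete : ∀ V : FDRep ℂ G, Simple V → ∃ i, Nonempty (V ≅ ρ i)) :
    (Nat.card {κ : D → G // IsGFlow σ α κ ∧ ∀ d, κ d ≠ 1} : ℂ)
      = ∑ᶠ B : Set (Quotient α.cycleSetoid),
          (-1 : ℂ) ^ (Nat.card ↥Bᶜ) *
            (Nat.card G : ℂ) ^ ((Nat.card ↥B : ℤ) - (σ.cycleCount : ℤ)) *
            ∏ᶠ C : Quotient (Relation.EqvGen.setoid (spanningRel σ α B)),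
              ∑ i, ((ρ i).character 1) ^ (componentEuler σ α B C) := by
  classical
  obtain ⟨n, hn1, hn0, R, hR1, hR2⟩ := GFlow.exists_big_rep ι ρ hsimple hpairwise hcomplete
  have hG : (Fintype.card G : ℂ) ≠ 0 := by simp
  rw [GFlow.incl_excl σ α hinv, finsum_eq_sum_of_fintype, ← Fintype.finsetEquivSet.sum_comp]
  refine Finset.sum_congr rfl fun t _ => ?_
  rw [Fintype.finsetEquivSet_apply, mul_assoc]
  have c1 : (Finset.univ \ t).card = Nat.card ↥((t : Set (Quotient α.cycleSetoid))ᶜ) := by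
    rw [← Finset.compl_eq_univ_sdiff, ← Finset.coe_compl, Nat.card_coe_set_eq,
      Set.ncard_coe_finset]
  have c2 : Nat.card ↥(t : Set (Quotient α.cycleSetoid)) =
      (Finset.univ.filter fun e : Quotient α.cycleSetoid =>
        e ∈ (t : Set (Quotient α.cycleSetoid))).card := by
    simp
  rw [c1]
  congr 1
  have h1 := GFlow.count_B σ α hinv hfpf n R hR1 (by convert hR2) (t : Set (Quotient α.cycleSetoid))
  have h2 := GFlow.sum_good σ α hinv hn0 (t : Set (Quotient α.cycleSetoid)) (Fintype.card G : ℂ)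
  rw [finprod_eq_prod_of_fintype, zpow_sub₀ (by simp), zpow_natCast, zpow_natCast, c2,
    Equiv.Perm.cycleCount, Nat.card_eq_fintype_card, Nat.card_eq_fintype_card]
  simp_rw [hn1, GFlow.euler_eq σ α hinv]
  refine Eq.trans ?_ (h1.trans ?_)
  · congr!
  · rw [h2, div_eq_mul_inv, ← mul_assoc, mul_comm (_⁻¹)]
    congr!
end

section
/- Let G and G' be finite groups such that the multiset of degrees {χ_λ(1) : λ ∈ Irr(G)} equals the multiset {χ_μ(1) : μ ∈ Irr(G')} (i.e. there is a bijection Irr(G) → Irr(G') preserving degrees). Then for every connected combinatorial map M, the number of nowhere-identity G-flows on M equals the number of nowhere-identity G'-flows on M. -/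
open Equiv

section RepPart
open CategoryTheory
variable {G : Type} [Group G]

/-- The representation underlying an object of `FDRep`. -/
noncomputable abbrev flowRep (V : FDRep ℂ G) : Representation ℂ G V := V.ρ

theorem flow_exists_hom (V W : FDRep ℂ G) (f : V →ₗ[ℂ] W)
    (hf : ∀ g v, f (V.ρ g v) = W.ρ g (f v)) :
    ∃ F : V ⟶ W, F.hom.hom.hom = f :=
  ⟨⟨InducedCategory.homMk (ModuleCat.ofHom f), fun g ↦ by
    ext1
    ext v
    exact hf g v⟩, rfl⟩

theorem flow_hom_comm (V W : FDRep ℂ G) (F : V ⟶ W) (g : G) (v : V) :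
    F.hom.hom.hom (V.ρ g v) = W.ρ g (F.hom.hom.hom v) := 
  ConcreteCategory.congr_hom ((forget (FGModuleCat ℂ)).congr_map (F.comm g)) v

theorem flow_hom_ext (V W : FDRep ℂ G) (F F' : V ⟶ W) (h : F.hom.hom.hom = F'.hom.hom.hom) :
    F = F' := by
  ext v; exact congrArg (fun f : V →ₗ[ℂ] W => f v) h

theorem flow_comm_alg {V W : Type} [AddCommGroup V] [Module ℂ V] [AddCommGroup W] [Module ℂ W]
    (ρ : Representation ℂ G V) (ρ' : Representation ℂ G W) (f : V →ₗ[ℂ] W)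
    (hf : ∀ g v, f (ρ g v) = ρ' g (f v)) (a : MonoidAlgebra ℂ G) (v : V) :
    f (ρ.asAlgebraHom a v) = ρ'.asAlgebraHom a (f v) := by
  induction a using MonoidAlgebra.induction_on with
  | of g => simp [hf]
  | add x y hx hy => simp [hx, hy]
  | smul r x hx => simp [hx]

/-- The product of all irreducible representations as an algebra map. -/
noncomputable def flowPhi {ι : Type} (ρ : ι → FDRep ℂ G) :
    MonoidAlgebra ℂ G →ₐ[ℂ] (∀ i, Module.End ℂ (ρ i)) :=
  AlgHom.pi fun i => (flowRep (ρ i)).asAlgebraHom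

theorem flow_simple_ofModule [Finite G] (M : Type) [AddCommGroup M] [Module ℂ M]
    [Module (MonoidAlgebra ℂ G) M] [IsScalarTower ℂ (MonoidAlgebra ℂ G) M]
    [Module.Finite ℂ M] [IsSimpleModule (MonoidAlgebra ℂ G) M] :
    Simple (FDRep.of (Representation.ofModule' (k := ℂ) (G := G) M)) := by
  have : NeZero (Nat.card G : ℂ) := ⟨by exact_mod_cast Nat.card_pos.ne'⟩
  rw [FDRep.simple_iff_end_is_rank_one]
  set V := FDRep.of (Representation.ofModule' (k := ℂ) (G := G) M) with hV
  have hrho : ∀ (g : G) (m : M), Representation.ofModule' (k := ℂ) (G := G) M g m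
      = MonoidAlgebra.of ℂ G g • m := by
    intro g m
    simp [Representation.ofModule']
  have : Nontrivial M := IsSimpleModule.nontrivial (MonoidAlgebra ℂ G) M
  have hne : (𝟙 V) ≠ 0 := by
    intro h
    obtain ⟨m, hm⟩ := exists_ne (0 : M)
    apply hm
    have : (𝟙 V : V ⟶ V).hom.hom.hom = (0 : V ⟶ V).hom.hom.hom := by rw [h]
    exact congrArg (fun f : M →ₗ[ℂ] M => f m) this
  rw [finrank_eq_one_iff_of_nonzero' _ hne]
  intro F
  let f : M →ₗ[ℂ] M := F.hom.hom.hom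
  have hf : ∀ (a : MonoidAlgebra ℂ G) m, f (a • m) = a • f m := by
    intro a m
    induction a using MonoidAlgebra.induction_on with
    | of g =>
      have := flow_hom_comm V V F g m
      rw [← hrho, ← hrho]
      exact this
    | add x y hx hy => simp [hx, hy, add_smul]
    | smul r x hx => simp [hx]
  let f' : Module.End (MonoidAlgebra ℂ G) M := { toFun := f, map_add' := f.map_add, map_smul' := hf }
  obtain ⟨c, hc⟩ := (IsSimpleModule.algebraMap_end_bijective_of_isAlgClosed
    (A := MonoidAlgebra ℂ G) (V := M) ℂ).2 f'
  refine ⟨c, ?_⟩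
  apply flow_hom_ext
  apply LinearMap.ext
  intro m
  have := congrArg (fun f : Module.End (MonoidAlgebra ℂ G) M => f m) hc
  exact this

theorem flow_ofModule_smul (M : Type) [AddCommGroup M] [Module ℂ M]
    [Module (MonoidAlgebra ℂ G) M] [IsScalarTower ℂ (MonoidAlgebra ℂ G) M]
    (a : MonoidAlgebra ℂ G) (m : M) :
    (Representation.ofModule' (k := ℂ) (G := G) M).asAlgebraHom a m = a • m := by
  induction a using MonoidAlgebra.induction_on with
  | of g => simp [Representation.ofModule']
  | add x y hx hy => simp [hx, hy, add_smul]
  | smul r x hx => simp [hx]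

theorem flowPhi_injective [Finite G] {ι : Type} (ρ : ι → FDRep ℂ G)
    (hcomplete : ∀ V : FDRep ℂ G, Simple V → ∃ i, Nonempty (V ≅ ρ i)) :
    Function.Injective (flowPhi ρ) := by
  have : NeZero (Nat.card G : ℂ) := ⟨by exact_mod_cast Nat.card_pos.ne'⟩
  have : Module.Finite ℂ (MonoidAlgebra ℂ G) := inferInstance
  rw [injective_iff_map_eq_zero]
  intro a ha
  have hj : Ring.jacobson (MonoidAlgebra ℂ G) = ⊥ := IsSemisimpleRing.jacobson_eq_bot _
  rw [← Ideal.mem_bot, ← hj]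
  refine Submodule.mem_sInf.2 fun m hm => ?_
  have : IsSimpleModule (MonoidAlgebra ℂ G) (MonoidAlgebra ℂ G ⧸ m) :=
    isSimpleModule_iff_isCoatom.2 hm
  have : Module.Finite ℂ (MonoidAlgebra ℂ G ⧸ m) :=
    Module.Finite.trans (MonoidAlgebra ℂ G) _
  obtain ⟨i, ⟨I⟩⟩ := hcomplete _ (flow_simple_ofModule (G := G) (MonoidAlgebra ℂ G ⧸ m))
  have h0 : (flowRep (ρ i)).asAlgebraHom a = 0 := congrFun ha i
  set V := FDRep.of (Representation.ofModule' (k := ℂ) (G := G) (MonoidAlgebra ℂ G ⧸ m)) with hV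
  have h1 : ∀ v : V, (flowRep V).asAlgebraHom a v = 0 := by
    intro v
    have := flow_comm_alg (flowRep (ρ i)) (flowRep V) I.inv.hom.hom.hom (flow_hom_comm _ _ I.inv) a
      (I.hom.hom.hom.hom v)
    rw [h0] at this
    have h2 : I.inv.hom.hom.hom (I.hom.hom.hom.hom v) = v :=
      congrArg (fun F : V ⟶ V => F.hom.hom.hom v) I.hom_inv_id
    rw [h2] at this
    rw [← this]; simp
  have h3 : a • (Submodule.Quotient.mk 1 : MonoidAlgebra ℂ G ⧸ m) = 0 := by
    have h4 := h1 (Submodule.Quotient.mk (p := m) 1)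
    rw [← flow_ofModule_smul]
    exact h4
  rw [← Submodule.Quotient.mk_smul, Submodule.Quotient.mk_eq_zero] at h3
  simpa using h3

theorem flowPhi_surjective [Finite G] {ι : Type} [Fintype ι] (ρ : ι → FDRep ℂ G)
    (hsimple : ∀ i, Simple (ρ i))
    (hpairwise : ∀ i j, Nonempty (ρ i ≅ ρ j) → i = j) :
    Function.Surjective (flowPhi ρ) := by
  classical
  have : NeZero (Nat.card G : ℂ) := ⟨by exact_mod_cast Nat.card_pos.ne'⟩
  intro F0
  let R := MonoidAlgebra ℂ G
  let N : ι → Type := fun i => (flowRep (ρ i)).asModule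
  let F : ∀ i, Module.End ℂ (flowRep (ρ i)).asModule := fun i =>
    (flowRep (ρ i)).asModuleEquiv.symm.conj (F0 i)
  -- components of an endomorphism
  have key : ∀ (i j : ι) (f : (flowRep (ρ j)).asModule →ₗ[MonoidAlgebra ℂ G]
      (flowRep (ρ i)).asModule),
      ∀ v : (flowRep (ρ j)).asModule, f (F j v) = F i (f v) := by
    intro i j f
    let f0 : (ρ j) →ₗ[ℂ] (ρ i) := (flowRep (ρ i)).asModuleEquiv.toLinearMap ∘ₗ
      f.restrictScalars ℂ ∘ₗ (flowRep (ρ j)).asModuleEquiv.symm.toLinearMap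
    obtain ⟨H, hH⟩ := flow_exists_hom (ρ j) (ρ i) f0 (by
      intro g v
      have := f.map_smul (MonoidAlgebra.of ℂ G g) ((flowRep (ρ j)).asModuleEquiv.symm v)
      rw [← Representation.asModuleEquiv_symm_map_rho] at this
      simp only [f0, LinearMap.comp_apply, LinearEquiv.coe_coe, LinearMap.restrictScalars_apply]
      rw [this, Representation.asModuleEquiv_map_smul]
      simp)
    have := hsimple i
    have := hsimple j
    have hr := FDRep.finrank_hom_simple_simple (ρ j) (ρ i)
    by_cases hij : j = i
    · subst hij
      rw [if_pos ⟨Iso.refl _⟩] at hr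
      obtain ⟨c, hc⟩ := (finrank_eq_one_iff_of_nonzero' _ (id_nonzero (ρ j))).1 hr H
      have hfc : ∀ v, f0 v = c • v := by
        intro v
        rw [← hH, ← hc]; rfl
      have hfc' : ∀ v, f v = c • v := by
        intro v
        have h1 := hfc ((flowRep (ρ j)).asModuleEquiv v)
        apply (flowRep (ρ j)).asModuleEquiv.injective
        rw [map_smul, ← h1]
        simp [f0]
      intro v
      rw [hfc', hfc', map_smul]
    · rw [if_neg (fun h => hij (hpairwise _ _ h))] at hr
      have h0 : H = 0 := by
        have := Module.finrank_zero_iff.1 hr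
        exact Subsingleton.elim _ _
      have hfc : ∀ v, f0 v = 0 := by
        intro v
        rw [← hH, h0]; rfl
      have hfc' : ∀ v, f v = 0 := by
        intro v
        have h1 := hfc ((flowRep (ρ j)).asModuleEquiv v)
        apply (flowRep (ρ i)).asModuleEquiv.injective
        rw [map_zero, ← h1]
        simp [f0]
      intro v
      rw [hfc', hfc', map_zero]
  let φ : Module.End (Module.End (MonoidAlgebra ℂ G) (∀ i, (flowRep (ρ i)).asModule))
      (∀ i, (flowRep (ρ i)).asModule) :=
    { toFun := fun m i => F i (m i)
      map_add' := fun x y => by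
        funext i; exact (F i).map_add _ _
      map_smul' := fun g m => by
        funext i
        have hdec : ∀ m : (∀ i, (flowRep (ρ i)).asModule),
            g m i = ∑ j, g (Pi.single j (m j)) i := by
          intro m
          conv_lhs => rw [← Finset.univ_sum_single m]
          rw [map_sum, Finset.sum_apply]
        change F i (g m i) = g (fun i => F i (m i)) i
        rw [hdec, hdec, map_sum]
        refine Finset.sum_congr rfl fun j _ => ?_
        exact (key i j ((LinearMap.proj i).comp
          (g.comp (LinearMap.single (MonoidAlgebra ℂ G) _ j))) (m j)).symm }
  let b := fun i => (Module.finBasis ℂ (ρ i)).map (flowRep (ρ i)).asModuleEquiv.symm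
  let bs : Finset (∀ i, (flowRep (ρ i)).asModule) := Finset.univ.biUnion fun i =>
    (Finset.univ.image fun k => Pi.single i (b i k))
  obtain ⟨r, hr⟩ := jacobson_density φ bs
  refine ⟨r, ?_⟩
  funext i
  refine (Module.finBasis ℂ (ρ i)).ext fun k => ?_
  have h1 := congrFun (hr (Pi.single i (b i k)) (by
    simp only [bs, Finset.mem_biUnion, Finset.mem_image]
    exact ⟨i, Finset.mem_univ _, k, Finset.mem_univ _, rfl⟩)) i
  have h2 : φ (Pi.single i (b i k)) i = F i (b i k) := by
    change F i ((Pi.single i (b i k) : ∀ i, (flowRep (ρ i)).asModule) i) = _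
    rw [Pi.single_eq_same]
  rw [h2, Pi.smul_apply, Pi.single_eq_same] at h1
  have h3 := congrArg (flowRep (ρ i)).asModuleEquiv h1
  rw [Representation.asModuleEquiv_map_smul] at h3
  simp only [F, b, LinearEquiv.conj_apply, Module.Basis.map_apply, LinearMap.comp_apply,
    LinearEquiv.coe_coe, LinearEquiv.apply_symm_apply, LinearEquiv.symm_symm] at h3
  exact h3.symm

theorem flow_algEquiv {G' : Type} [Group G'] [Finite G] [Finite G']
    (ι ι' : Type) [Fintype ι] [Fintype ι']
    (ρ : ι → FDRep ℂ G) (ρ' : ι' → FDRep ℂ G')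
    (hsimple : ∀ i, Simple (ρ i))
    (hpairwise : ∀ i j, Nonempty (ρ i ≅ ρ j) → i = j)
    (hcomplete : ∀ V : FDRep ℂ G, Simple V → ∃ i, Nonempty (V ≅ ρ i))
    (hsimple' : ∀ i, Simple (ρ' i))
    (hpairwise' : ∀ i j, Nonempty (ρ' i ≅ ρ' j) → i = j)
    (hcomplete' : ∀ V : FDRep ℂ G', Simple V → ∃ i, Nonempty (V ≅ ρ' i))
    (e : ι ≃ ι')
    (hdeg : ∀ i, (ρ i).character 1 = (ρ' (e i)).character 1) :
    Nonempty (MonoidAlgebra ℂ G ≃ₐ[ℂ] MonoidAlgebra ℂ G') := by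
  let A := AlgEquiv.ofBijective (flowPhi ρ)
    ⟨flowPhi_injective ρ hcomplete, flowPhi_surjective ρ hsimple hpairwise⟩
  let B := AlgEquiv.ofBijective (flowPhi ρ')
    ⟨flowPhi_injective ρ' hcomplete', flowPhi_surjective ρ' hsimple' hpairwise'⟩
  have hfr : ∀ i, Module.finrank ℂ (ρ i) = Module.finrank ℂ (ρ' (e i)) := by
    intro i
    have := hdeg i
    rw [FDRep.char_one, FDRep.char_one] at this
    exact_mod_cast this
  let E : ∀ i, Module.End ℂ (ρ i) ≃ₐ[ℂ] Module.End ℂ (ρ' (e i)) := fun i =>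
    (LinearEquiv.ofFinrankEq _ _ (hfr i)).conjAlgEquiv ℂ
  exact ⟨A.trans ((AlgEquiv.piCongrRight E).trans
    ((AlgEquiv.piCongrLeft ℂ (fun i' => Module.End ℂ (ρ' i')) e).trans B.symm))⟩

end RepPart

section AlgPart
variable {G : Type} [Group G] [Fintype G]

theorem flow_trace (a : MonoidAlgebra ℂ G) :
    LinearMap.trace ℂ (MonoidAlgebra ℂ G) (LinearMap.mulLeft ℂ a)
      = (Fintype.card G : ℂ) * a.coeff 1 := by
  classical
  rw [LinearMap.trace_eq_matrix_trace ℂ (MonoidAlgebra.basis G ℂ), Matrix.trace]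
  have : ∀ g : G, (LinearMap.toMatrix (MonoidAlgebra.basis G ℂ) (MonoidAlgebra.basis G ℂ)
      (LinearMap.mulLeft ℂ a)).diag g = a.coeff 1 := by
    intro g
    rw [Matrix.diag_apply, LinearMap.toMatrix_apply]
    simp [MonoidAlgebra.basis]
  rw [Finset.sum_congr rfl fun g _ => this g]
  simp

variable {G' : Type} [Group G'] [Fintype G']

theorem flow_tau (φ : MonoidAlgebra ℂ G ≃ₐ[ℂ] MonoidAlgebra ℂ G') (a : MonoidAlgebra ℂ G) :
    (φ a).coeff 1 = a.coeff 1 := by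
  have hcard : Fintype.card G = Fintype.card G' := by
    have h := φ.toLinearEquiv.finrank_eq
    rwa [Module.finrank_eq_card_basis (MonoidAlgebra.basis G ℂ),
      Module.finrank_eq_card_basis (MonoidAlgebra.basis G' ℂ)] at h
  have h1 : LinearMap.trace ℂ _ (LinearMap.mulLeft ℂ (φ a))
      = LinearMap.trace ℂ _ (LinearMap.mulLeft ℂ a) := by
    rw [← LinearMap.trace_conj' (LinearMap.mulLeft ℂ a) φ.toLinearEquiv]
    congr 1
    apply LinearMap.ext
    intro x
    simp [LinearEquiv.conj_apply]
  rw [flow_trace, flow_trace, hcard] at h1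
  exact mul_left_cancel₀ (by exact_mod_cast Fintype.card_ne_zero) h1

theorem flow_casimir (φ : MonoidAlgebra ℂ G ≃ₐ[ℂ] MonoidAlgebra ℂ G') [DecidableEq G'] (h k : G') :
    ∑ g : G, (φ (MonoidAlgebra.single g 1)).coeff h * (φ (MonoidAlgebra.single g⁻¹ 1)).coeff k
      = if k = h⁻¹ then 1 else 0 := by
  classical
  have h1 : ∀ g : G, (φ (MonoidAlgebra.single g 1)).coeff h
      = (φ.symm (MonoidAlgebra.single h⁻¹ 1)).coeff g⁻¹ := by
    intro g
    have e1 : (φ (MonoidAlgebra.single g 1)).coeff h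
        = (MonoidAlgebra.single h⁻¹ 1 * φ (MonoidAlgebra.single g 1)).coeff 1 := by
      simp
    have e2 : (φ.symm (MonoidAlgebra.single h⁻¹ 1)).coeff g⁻¹
        = (φ.symm (MonoidAlgebra.single h⁻¹ 1) * MonoidAlgebra.single g 1).coeff 1 := by
      simp
    rw [e1, e2, ← flow_tau φ, map_mul, AlgEquiv.apply_symm_apply]
  simp_rw [h1]
  refine (Equiv.sum_comp (Equiv.inv G) (fun g => (φ.symm (MonoidAlgebra.single h⁻¹ 1)).coeff g *
    (φ (MonoidAlgebra.single g 1)).coeff k)).trans ?_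
  have h2 : ∀ x : MonoidAlgebra ℂ G, x = ∑ g, x.coeff g • MonoidAlgebra.single g 1 := by
    intro x
    apply MonoidAlgebra.coeff_injective
    ext g
    simp [Finsupp.single_apply]
  have h3 := congrArg (fun y => (φ y).coeff k) (h2 (φ.symm (MonoidAlgebra.single h⁻¹ 1)))
  simp only [AlgEquiv.apply_symm_apply, map_sum, map_smul, MonoidAlgebra.coeff_sum,
    Finsupp.finsetSum_apply, MonoidAlgebra.coeff_smul_apply, smul_eq_mul,
    MonoidAlgebra.coeff_single, Finsupp.single_apply] at h3
  rw [← h3]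
  simp [eq_comm]

theorem flow_casimir' (φ : MonoidAlgebra ℂ G ≃ₐ[ℂ] MonoidAlgebra ℂ G') [DecidableEq G]
    [DecidableEq G'] (h k : G') :
    ∑ g : {g : G // g ≠ 1}, (φ (MonoidAlgebra.single g.1 1)).coeff h *
      (φ (MonoidAlgebra.single g.1⁻¹ 1)).coeff k = if k = h⁻¹ ∧ h ≠ 1 then 1 else 0 := by
  have h1 := flow_casimir φ h k
  rw [Fintype.sum_eq_add_sum_subtype_ne _ 1] at h1
  have h2 : φ (MonoidAlgebra.single 1 1) = MonoidAlgebra.single 1 1 := by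
    rw [← MonoidAlgebra.one_def, map_one, MonoidAlgebra.one_def]
  rw [inv_one, h2, ← eq_sub_iff_add_eq'] at h1
  rw [h1]
  simp only [MonoidAlgebra.coeff_single, Finsupp.single_apply]
  by_cases hh : h = 1
  · subst hh; simp [eq_comm]
  · simp [hh, Ne.symm hh]

end AlgPart

section EdgePart
variable {D : Type} [Fintype D] 

theorem flow_edge_half (α : Equiv.Perm D) (hinv : ∀ d, α (α d) = d) (hfpf : ∀ d, α d ≠ d) :
    ∃ r : D → Prop, ∀ d, r (α d) ↔ ¬ r d := by
  let f := Fintype.equivFin D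
  refine ⟨fun d => f d < f (α d), fun d => ?_⟩
  have : f d ≠ f (α d) := fun h => hfpf d (f.injective h).symm
  simp only [hinv, not_lt]
  exact ⟨le_of_lt, fun h => lt_of_le_of_ne h this.symm⟩

open Classical in
theorem flow_prod_half (α : Equiv.Perm D) (r : D → Prop)
    (hr : ∀ d, r (α d) ↔ ¬ r d) (F : D → ℂ) :
    ∏ d, F d = ∏ e : {d // r d}, F e.1 * F (α e.1) := by
  rw [← Fintype.prod_subtype_mul_prod_subtype r, Finset.prod_mul_distrib]
  congr 1
  symm
  refine Fintype.prod_equiv (α.subtypeEquiv fun d => ?_) _ _ fun e => rfl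
  rw [hr, not_not]

variable {G : Type} [Group G] [Fintype G]

open Classical in
theorem flow_edge_sum (α : Equiv.Perm D) (hinv : ∀ d, α (α d) = d) (r : D → Prop)
    (hr : ∀ d, r (α d) ↔ ¬ r d) (F : D → G → ℂ) :
    ∑ κ : {κ : D → G // IsGLabelling α κ ∧ ∀ d, κ d ≠ 1}, ∏ d, F d (κ.1 d)
      = ∏ e : {d // r d}, ∑ g : {g : G // g ≠ 1}, F e.1 g.1 * F (α e.1) g.1⁻¹ := by
  rw [Finset.prod_univ_sum, Fintype.piFinset_univ]
  have hra : ∀ d, ¬ r d → r (α d) := fun d h => (hr d).2 h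
  let E : {κ : D → G // IsGLabelling α κ ∧ ∀ d, κ d ≠ 1} ≃ ({d // r d} → {g : G // g ≠ 1}) :=
    { toFun := fun κ e => ⟨κ.1 e.1, κ.2.2 _⟩
      invFun := fun f => ⟨fun d => if h : r d then (f ⟨d, h⟩).1 else (f ⟨α d, hra d h⟩).1⁻¹, by
        refine ⟨fun d => ?_, fun d => ?_⟩
        · by_cases h : r d
          · have h' : ¬ r (α d) := fun h2 => (hr d).1 h2 h
            simp [h, h', hinv]
          · simp [h, hra d h]
        · by_cases h : r d
          · simpa [h] using (f ⟨d, h⟩).2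
          · simpa [h] using (f ⟨α d, hra d h⟩).2⟩
      left_inv := fun κ => by
        apply Subtype.ext
        funext d
        by_cases h : r d
        · simp [h]
        · simp [h, κ.2.1 d]
      right_inv := fun f => by
        funext e
        apply Subtype.ext
        simp [e.2] }
  refine Fintype.sum_equiv E _ _ fun κ => ?_
  rw [flow_prod_half α r hr]
  refine Finset.prod_congr rfl fun e _ => ?_
  simp only [E, Equiv.coe_fn_mk]
  rw [← κ.2.1]

end EdgePart

section VertexPart
variable {D : Type}

theorem flow_list_update {R : Type} [Ring R] [DecidableEq D] (l : List D) (hl : l.Nodup) (d : D)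
    (hd : d ∈ l) (a : D → R) :
    ∃ P Q : R, ∀ x, (l.map (Function.update a d x)).prod = P * x * Q := by
  obtain ⟨l1, l2, rfl⟩ := List.append_of_mem hd
  rw [List.nodup_middle, List.nodup_cons] at hl
  have h1 : ∀ l' : List D, d ∉ l' → ∀ x, l'.map (Function.update a d x) = l'.map a := by
    intro l' h x
    refine List.map_congr_left fun b hb => ?_
    rw [Function.update_of_ne]
    rintro rfl; exact h hb
  refine ⟨(l1.map a).prod, (l2.map a).prod, fun x => ?_⟩
  rw [List.map_append, List.map_cons, List.prod_append, List.prod_cons,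
    h1 l1 (fun h => hl.1 (by simp [h])), h1 l2 (fun h => hl.1 (by simp [h]))]
  simp [mul_assoc]

/-- The list of darts around a vertex. -/
noncomputable def flowCyc (σ : Equiv.Perm D) (d : D) : List D :=
  (List.range (Function.minimalPeriod (⇑σ) d)).map fun i => (σ ^ i) d

variable [Fintype D]

theorem flowCyc_nodup (σ : Equiv.Perm D) (d : D) : (flowCyc σ d).Nodup := by
  rw [flowCyc, List.nodup_map_iff_inj_on List.nodup_range]
  intro i hi j hj h
  rw [List.mem_range] at hi hj
  rw [← Equiv.Perm.iterate_eq_pow, ← Equiv.Perm.iterate_eq_pow] at h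
  exact Function.iterate_injOn_Iio_minimalPeriod hi hj h

theorem flowCyc_mem (σ : Equiv.Perm D) (d x : D) : x ∈ flowCyc σ d ↔ σ.SameCycle d x := by
  constructor
  · intro h
    obtain ⟨i, _, rfl⟩ := List.mem_map.1 h
    exact ⟨i, rfl⟩
  · intro h
    obtain ⟨n, hn⟩ := h.exists_pow_eq''
    obtain ⟨_, _, hn⟩ := hn
    refine List.mem_map.2 ⟨n % Function.minimalPeriod σ d, List.mem_range.2 (Nat.mod_lt _ ?_), ?_⟩
    · exact Function.minimalPeriod_pos_of_mem_periodicPts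
        (Function.Injective.mem_periodicPts σ.injective d)
    · rw [← hn, ← Equiv.Perm.iterate_eq_pow, ← Equiv.Perm.iterate_eq_pow,
        Function.iterate_mod_minimalPeriod_eq]

theorem aroundProd_eq_flowCyc {G : Type} [Group G] (σ : Equiv.Perm D) (κ : D → G) (d : D) :
    aroundProd σ κ d = ((flowCyc σ d).map κ).prod := by
  simp [aroundProd, flowCyc, Function.comp_def]

theorem aroundProd_step {G : Type} [Group G] (σ : Equiv.Perm D) (κ : D → G) (d : D)
    (h : aroundProd σ κ d = 1) : aroundProd σ κ (σ d) = 1 := by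
  have hper : d ∈ Function.periodicPts σ := Function.Injective.mem_periodicPts σ.injective d
  have hmp : Function.minimalPeriod σ (σ d) = Function.minimalPeriod σ d :=
    Function.minimalPeriod_apply hper
  have hpos := Function.minimalPeriod_pos_of_mem_periodicPts hper
  unfold aroundProd at *
  rw [hmp]
  obtain ⟨n, hn⟩ := Nat.exists_eq_succ_of_ne_zero hpos.ne'
  have hp : (σ ^ (n + 1)) d = d := by
    have := Function.isPeriodicPt_minimalPeriod σ d
    rw [hn] at this
    rw [← Equiv.Perm.iterate_eq_pow]
    exact this
  rw [hn] at h ⊢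
  rw [List.range_succ_eq_map] at h
  rw [List.range_succ]
  simp only [List.map_cons, List.map_map, List.prod_cons, List.map_append, List.map_nil,
    List.prod_append, List.prod_nil, mul_one, Function.comp_def, pow_zero,
    Equiv.Perm.one_apply] at h ⊢
  have e : ∀ i, (σ ^ i) (σ d) = (σ ^ (i + 1)) d := fun i => by
    rw [pow_succ, Equiv.Perm.mul_apply]
  simp only [e, hp]
  exact mul_eq_one_comm.1 h

theorem aroundProd_sameCycle {G : Type} [Group G] (σ : Equiv.Perm D) (κ : D → G) (d x : D)
    (hx : σ.SameCycle d x) (h : aroundProd σ κ d = 1) : aroundProd σ κ x = 1 := by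
  have hi : ∀ i : ℕ, aroundProd σ κ ((σ ^ i) d) = 1 := by
    intro i
    induction i with
    | zero => simpa using h
    | succ n ih =>
      rw [pow_succ', Equiv.Perm.mul_apply]
      exact aroundProd_step σ κ _ ih
  obtain ⟨i, _, rfl⟩ := List.mem_map.1 ((flowCyc_mem σ d x).2 hx)
  exact hi i

open Classical in
/-- The product over vertices of the traces of the products around the vertices. -/
noncomputable def flowVertex {R : Type} [Ring R] [Algebra ℂ R] (τ : R →ₗ[ℂ] ℂ)
    (σ : Equiv.Perm D) : MultilinearMap ℂ (fun _ : D => R) ℂ :=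
  have key : ∀ (inst : DecidableEq D) (a : D → R) (d : D), ∃ (P Q : R) (z : ℂ), ∀ x,
      ∏ c : Quotient σ.cycleSetoid,
        τ ((flowCyc σ c.out).map (Function.update a d x)).prod = τ (P * x * Q) * z := by
    intro inst a d
    let c0 : Quotient σ.cycleSetoid := Quotient.mk _ d
    have hmem : ∀ c : Quotient σ.cycleSetoid, d ∈ flowCyc σ c.out ↔ c = c0 := by
      intro c
      rw [flowCyc_mem]
      constructor
      · intro h
        rw [← Quotient.out_eq c]
        exact Quotient.sound h
      · rintro rfl
        exact Quotient.exact (Quotient.out_eq c0)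
    obtain ⟨P, Q, hPQ⟩ := flow_list_update (flowCyc σ c0.out) (flowCyc_nodup _ _) d
      ((hmem c0).2 rfl) a
    refine ⟨P, Q, ∏ c ∈ Finset.univ.erase c0, τ ((flowCyc σ c.out).map a).prod, fun x => ?_⟩
    rw [← Finset.mul_prod_erase _ _ (Finset.mem_univ c0), hPQ]
    congr 1
    refine Finset.prod_congr rfl fun c hc => ?_
    congr 2
    refine List.map_congr_left fun b hb => ?_
    rw [Function.update_of_ne]
    rintro rfl
    exact (Finset.mem_erase.1 hc).1 ((hmem c).1 hb)
  { toFun := fun a => ∏ c : Quotient σ.cycleSetoid, τ ((flowCyc σ c.out).map a).prod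
    map_update_add' := fun {inst} a d x y => by
      obtain ⟨P, Q, z, h⟩ := key inst a d
      rw [h, h, h]
      simp [mul_add, add_mul]
    map_update_smul' := fun {inst} a d c x => by
      obtain ⟨P, Q, z, h⟩ := key inst a d
      rw [h, h]
      simp [mul_assoc] }

open Classical in
theorem flowVertex_apply {R : Type} [Ring R] [Algebra ℂ R] (τ : R →ₗ[ℂ] ℂ)
    (σ : Equiv.Perm D) (a : D → R) :
    flowVertex τ σ a = ∏ c : Quotient σ.cycleSetoid, τ ((flowCyc σ c.out).map a).prod := rfl

/-- The coefficient of the identity. -/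
noncomputable def flowTau (G : Type) [Group G] : MonoidAlgebra ℂ G →ₗ[ℂ] ℂ where
  toFun a := a.coeff 1
  map_add' a b := by simp
  map_smul' a b := by simp

open Classical in
theorem flowVertex_group {G : Type} [Group G] (σ : Equiv.Perm D) (κ : D → G) :
    flowVertex (flowTau G) σ (fun d => MonoidAlgebra.single (κ d) 1)
      = if ∀ d, aroundProd σ κ d = 1 then 1 else 0 := by
  have h1 : ∀ l : List D, (l.map fun d => (MonoidAlgebra.single (κ d) 1 : MonoidAlgebra ℂ G)).prod
      = MonoidAlgebra.single (l.map κ).prod 1 := by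
    intro l
    induction l with
    | nil => simp [MonoidAlgebra.one_def]
    | cons a l ih => simp [ih, MonoidAlgebra.single_mul_single]
  rw [flowVertex_apply]
  have h2 : ∀ c : Quotient σ.cycleSetoid, flowTau G ((flowCyc σ c.out).map fun d =>
      (MonoidAlgebra.single (κ d) 1 : MonoidAlgebra ℂ G)).prod
      = if aroundProd σ κ c.out = 1 then 1 else 0 := by
    intro c
    rw [h1, aroundProd_eq_flowCyc]
    change (MonoidAlgebra.single ((flowCyc σ c.out).map κ).prod (1 : ℂ)).coeff 1 = _
    simp only [MonoidAlgebra.coeff_single, Finsupp.single_apply]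
  rw [Finset.prod_congr rfl fun c _ => h2 c, Finset.prod_ite_zero]
  simp only [Finset.mem_univ, true_imp_iff, Finset.prod_const_one]
  congr 1
  apply propext
  constructor
  · intro h d
    have hq : σ.SameCycle (Quotient.mk σ.cycleSetoid d).out d :=
      Quotient.exact (Quotient.out_eq (Quotient.mk σ.cycleSetoid d))
    exact aroundProd_sameCycle σ κ _ d hq (h _)
  · intro h c
    exact h _

end VertexPart

section Final
variable {D : Type} [Fintype D] {G G' : Type} [Group G] [Fintype G] [Group G'] [Fintype G']

theorem flowVertex_map (φ : MonoidAlgebra ℂ G ≃ₐ[ℂ] MonoidAlgebra ℂ G') (σ : Equiv.Perm D)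
    (a : D → MonoidAlgebra ℂ G) :
    flowVertex (flowTau G') σ (fun d => φ (a d)) = flowVertex (flowTau G) σ a := by
  classical
  rw [flowVertex_apply, flowVertex_apply]
  refine Finset.prod_congr rfl fun c _ => ?_
  have : ((flowCyc σ c.out).map fun d => φ (a d)).prod = φ ((flowCyc σ c.out).map a).prod := by
    rw [map_list_prod, List.map_map]; rfl
  rw [this]
  exact flow_tau φ _

open Classical in
theorem flow_count (σ α : Equiv.Perm D) :
    (Nat.card {κ : D → G // IsGFlow σ α κ ∧ ∀ d, κ d ≠ 1} : ℂ)
      = ∑ κ : {κ : D → G // IsGLabelling α κ ∧ ∀ d, κ d ≠ 1},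
        flowVertex (flowTau G) σ (fun d => MonoidAlgebra.single (κ.1 d) 1) := by
  simp_rw [flowVertex_group]
  rw [Finset.sum_boole, Nat.card_eq_fintype_card, ← Fintype.card_subtype]
  congr 1
  refine Fintype.card_congr
    ⟨fun κ => ⟨⟨κ.1, κ.2.1.1, κ.2.2⟩, κ.2.1.2⟩, fun κ => ⟨κ.1.1, ⟨κ.1.2.1, κ.2⟩, κ.1.2.2⟩,
      fun _ => rfl, fun _ => rfl⟩

theorem flow_main (φ : MonoidAlgebra ℂ G ≃ₐ[ℂ] MonoidAlgebra ℂ G') (σ α : Equiv.Perm D)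
    (hinv : ∀ d, α (α d) = d) (hfpf : ∀ d, α d ≠ d) :
    Nat.card {κ : D → G // IsGFlow σ α κ ∧ ∀ d, κ d ≠ 1}
      = Nat.card {κ : D → G' // IsGFlow σ α κ ∧ ∀ d, κ d ≠ 1} := by
  classical
  apply Nat.cast_injective (R := ℂ)
  rw [flow_count, flow_count]
  obtain ⟨r, hr⟩ := flow_edge_half α hinv hfpf
  have hexp : ∀ x : MonoidAlgebra ℂ G', x = ∑ g, x.coeff g • MonoidAlgebra.single g 1 := by
    intro x
    apply MonoidAlgebra.coeff_injective
    ext g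
    simp [Finsupp.single_apply]
  have h1 : ∀ κ : D → G, flowVertex (flowTau G) σ (fun d => MonoidAlgebra.single (κ d) 1)
      = ∑ lam : D → G', (∏ d, (φ (MonoidAlgebra.single (κ d) 1)).coeff (lam d)) *
        flowVertex (flowTau G') σ (fun d => MonoidAlgebra.single (lam d) 1) := by
    intro κ
    rw [← flowVertex_map φ]
    have : (fun d => φ (MonoidAlgebra.single (κ d) 1)) = fun d => ∑ g,
        (φ (MonoidAlgebra.single (κ d) 1)).coeff g • (MonoidAlgebra.single g 1 : MonoidAlgebra ℂ G') :=
      funext fun d => hexp _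
    rw [this, MultilinearMap.map_sum]
    refine Finset.sum_congr rfl fun lam _ => ?_
    rw [MultilinearMap.map_smul_univ, smul_eq_mul]
  simp_rw [h1]
  rw [Finset.sum_comm]
  simp_rw [← Finset.sum_mul]
  have h2 : ∀ lam : D → G', ∑ κ : {κ : D → G // IsGLabelling α κ ∧ ∀ d, κ d ≠ 1},
      ∏ d, (φ (MonoidAlgebra.single (κ.1 d) 1)).coeff (lam d)
      = if IsGLabelling α lam ∧ ∀ d, lam d ≠ 1 then 1 else 0 := by
    intro lam
    rw [flow_edge_sum α hinv r hr fun d g => (φ (MonoidAlgebra.single g 1)).coeff (lam d)]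
    simp_rw [flow_casimir']
    rw [Finset.prod_ite_zero]
    simp only [Finset.mem_univ, true_imp_iff, Finset.prod_const_one]
    congr 1
    apply propext
    constructor
    · intro h
      have hl : IsGLabelling α lam := by
        intro d
        by_cases hd : r d
        · exact (h ⟨d, hd⟩).1
        · have := (h ⟨α d, (hr d).2 hd⟩).1
          rw [hinv] at this
          rw [this, inv_inv]
      refine ⟨hl, fun d => ?_⟩
      by_cases hd : r d
      · exact (h ⟨d, hd⟩).2
      · have := (h ⟨α d, (hr d).2 hd⟩).2
        intro h1
        apply this
        change lam (α d) = 1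
        rw [hl d, h1, inv_one]
    · intro h e
      exact ⟨h.1 _, h.2 _⟩
  simp_rw [h2, ite_mul, one_mul, zero_mul]
  rw [← Finset.sum_filter]
  exact (Finset.sum_subtype _ (by simp) _)

end Final

open CategoryTheory in
/-- If two finite groups have the same multiset of degrees of irreducible characters
(witnessed by a degree-preserving bijection between their irreducible representations),
then every connected combinatorial map has the same number of nowhere-identity `G`-flows
and nowhere-identity `G'`-flows. -/
theorem nowhere_identity_flow_count_depends_only_on_degrees
    {G G' : Type} [Group G] [Fintype G] [Group G'] [Fintype G']
    (ι ι' : Type) [Fintype ι] [Fintype ι']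
    (ρ : ι → FDRep ℂ G) (ρ' : ι' → FDRep ℂ G')
    (hsimple : ∀ i, Simple (ρ i))
    (hpairwise : ∀ i j, Nonempty (ρ i ≅ ρ j) → i = j)
    (hcomplete : ∀ V : FDRep ℂ G, Simple V → ∃ i, Nonempty (V ≅ ρ i))
    (hsimple' : ∀ i, Simple (ρ' i))
    (hpairwise' : ∀ i j, Nonempty (ρ' i ≅ ρ' j) → i = j)
    (hcomplete' : ∀ V : FDRep ℂ G', Simple V → ∃ i, Nonempty (V ≅ ρ' i))
    (e : ι ≃ ι')
    (hdeg : ∀ i, (ρ i).character 1 = (ρ' (e i)).character 1)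
    {D : Type} [Fintype D] [Nonempty D] (σ α : Equiv.Perm D)
    (hinv : ∀ d, α (α d) = d) (hfpf : ∀ d, α d ≠ d)
    (hconn : MapConnected σ α) :
    Nat.card {κ : D → G // IsGFlow σ α κ ∧ ∀ d, κ d ≠ 1}
      = Nat.card {κ : D → G' // IsGFlow σ α κ ∧ ∀ d, κ d ≠ 1} := by
  obtain ⟨φ⟩ := flow_algEquiv ι ι' ρ ρ' hsimple hpairwise hcomplete hsimple' hpairwise'
    hcomplete' e hdeg
  exact flow_main φ σ α hinv hfpf
end
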